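/- Let ψ : [3,∞) → (0,∞) be monotonically decreasing with ψ(X) → 0 as X → ∞. Then there exist a multiplicative function f : ℕ → [−1,1], with g := 1 ∗ f, and a constant c > 0 such that for all sufficiently large X, max_{X < x ≤ X²} |L_f(x) − M̃_g(w₀x)| ≥ c·ψ(X)/(log X)^{1−2/π}. -/

import Mathlib

/-!
Let `f` be completely multiplicative with `f(p)` the Fejér mean, of degree about `(log p)^(2/5)`, of
the square wave `sgn cos θ` at `θ = t log p`, for a suitable frequency `t ≠ 0`. Twisting by
`p^{-it}` shifts the harmonics, and only one, with coefficient `2/π`, becomes constant. The others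
contribute twisted sums `∑ Λ(n) n^{-1-iτ}` with `|τ| ≥ |t|`, which are bounded polynomially in `τ`
because of the lower bound for `ζ` on `Re s = 1` that follows from the 3-4-1 inequality. Hence
`∑_{n ≤ N} Λ(n) f(n) n^{-1-it} = (2/π) log N + O((log N)^{3/5})`.

From `log = Λ ∗ 1`, the sums `∑_{n ≤ e^V} f(n) n^{-1-it}` and their primitive satisfy an approximate
linear differential equation, so that they are `C₀ V^{2/π} + O(V^{3/5})`. The constant `C₀` is
nonzero because the `L`-series of `f(n) n^{-1-it}` is at least of order `σ^{-2/π}` as `σ → 0+`.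

For every `w > 0` the difference `L_f(e^u) - M̃_g(w e^u)` is `∑ f(n)/n · κ(u - log n)` with an
explicit integrable kernel `κ`, whose Fourier transform is nonzero at some `t ≠ 0` by Fourier
inversion; this is the frequency to use. Integrating the difference against `e^{-itu}` over
`[U, 2U]`, where `U = log X`, gives `κ̂(t)` times a difference of the partial sums above, up to
`O(1)`. So the integral is `≫ U^{2/π}`, and the supremum over `X < x ≤ X²` is `≫ U^{2/π - 1}`.
-/

open Finset Filter

noncomputable def Lsum (h : ℕ → ℝ) (x : ℝ) : ℝ := ∑ n ∈ Finset.Icc 1 ⌊x⌋₊, h n / n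

noncomputable def Mt (h : ℕ → ℝ) (x : ℝ) : ℝ := (∑ n ∈ Finset.Icc 1 ⌊x⌋₊, h n) / x

noncomputable def w0 : ℝ := Real.exp (1 - Real.eulerMascheroniConstant)

def IsMult (f : ℕ → ℝ) : Prop := f 1 = 1 ∧ ∀ m n : ℕ, Nat.Coprime m n → f (m * n) = f m * f n

noncomputable def dconv (f : ℕ → ℝ) : ℕ → ℝ := fun n => ∑ d ∈ n.divisors, f d

open Complex (I)
open scoped ArithmeticFunction.vonMangoldt

/-! ### The Riemann zeta function on the line `Re s = 1` -/

lemma norm_sub_primitive_sub_le {E : Type*} [NormedAddCommGroup E] [NormedSpace ℝ E]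
    {φ G φ' : ℝ → E} {a C : ℝ}
    (hG : ∀ x ∈ Set.Icc a (a + 1), HasDerivAt G (φ x) x)
    (hφ : ∀ x ∈ Set.Icc a (a + 1), HasDerivAt φ (φ' x) x)
    (hC : ∀ x ∈ Set.Icc a (a + 1), ‖φ' x‖ ≤ C) :
    ‖φ (a + 1) - (G (a + 1) - G a)‖ ≤ C := by
  have ha : a ∈ Set.Icc a (a + 1) := Set.left_mem_Icc.2 (by linarith)
  have ha1 : a + 1 ∈ Set.Icc a (a + 1) := Set.right_mem_Icc.2 (by linarith)
  have hosc : ∀ x ∈ Set.Icc a (a + 1), ‖φ x - φ (a + 1)‖ ≤ C := fun x hx ↦ by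
    have hC0 : 0 ≤ C := (norm_nonneg _).trans (hC x hx)
    have hx1 : ‖x - (a + 1)‖ ≤ 1 := by
      rw [Real.norm_eq_abs, abs_le]; constructor <;> linarith [hx.1, hx.2]
    calc ‖φ x - φ (a + 1)‖ ≤ C * ‖x - (a + 1)‖ :=
          (convex_Icc a (a + 1)).norm_image_sub_le_of_norm_hasDerivWithin_le
            (fun y hy ↦ (hφ y hy).hasDerivWithinAt) hC ha1 hx
      _ ≤ C := mul_le_of_le_one_right hC0 hx1
  have hderiv : ∀ x ∈ Set.Icc a (a + 1), HasDerivWithinAt (fun y ↦ G y - y • φ (a + 1))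
      (φ x - φ (a + 1)) (Set.Icc a (a + 1)) x := fun x hx ↦ by
    simpa only [one_smul, id] using!
      ((hG x hx).sub ((hasDerivAt_id x).smul_const (φ (a + 1)))).hasDerivWithinAt
  have hmv := (convex_Icc a (a + 1)).norm_image_sub_le_of_norm_hasDerivWithin_le
    hderiv hosc ha ha1
  rw [add_sub_cancel_left, norm_one, mul_one] at hmv
  refine le_of_eq_of_le ?_ hmv
  rw [← norm_neg]
  congr 1
  module

lemma norm_natCast_add_one_cpow_neg_sub_le {s : ℂ} (hs : 1 ≤ s.re) (hs1 : s ≠ 1) {n : ℕ}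
    (hn : 1 ≤ n) :
    ‖((n + 1 : ℕ) : ℂ) ^ (-s) - (((n + 1 : ℕ) : ℂ) ^ (1 - s) - (n : ℂ) ^ (1 - s)) / (1 - s)‖
      ≤ ‖s‖ / n ^ 2 := by
  have hn1 : (1 : ℝ) ≤ n := mod_cast hn
  have hs0 : s ≠ 0 := by rintro rfl; norm_num at hs
  have h1s : 1 - s ≠ 0 := sub_ne_zero.2 hs1.symm
  have key := norm_sub_primitive_sub_le (a := n) (C := ‖s‖ / n ^ 2)
    (φ := fun x : ℝ ↦ (x : ℂ) ^ (-s)) (G := fun x : ℝ ↦ (x : ℂ) ^ (1 - s) / (1 - s))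
    (φ' := fun x : ℝ ↦ (-s) * (x : ℂ) ^ (-s - 1)) ?_ ?_ ?_
  · simpa [sub_div] using key
  · intro x hx
    have hx0 : x ≠ 0 := by linarith [hx.1]
    have := (hasDerivAt_ofReal_cpow_const hx0 h1s).div_const (1 - s)
    rwa [mul_div_cancel_left₀ _ h1s, show 1 - s - 1 = -s by ring] at this
  · exact fun x hx ↦ hasDerivAt_ofReal_cpow_const (by linarith [hx.1]) (neg_ne_zero.2 hs0)
  · intro x hx
    have hx1 : (1 : ℝ) ≤ x := hn1.trans hx.1
    have hx0 : 0 < x := by linarith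
    rw [norm_mul, norm_neg, Complex.norm_cpow_eq_rpow_re_of_pos hx0, div_eq_mul_inv]
    gcongr
    calc x ^ (-s - 1).re ≤ x ^ (-2 : ℝ) :=
          Real.rpow_le_rpow_of_exponent_le hx1 (by simp; linarith)
      _ = (x ^ 2)⁻¹ := by rw [Real.rpow_neg hx0.le]; norm_num
      _ ≤ ((n : ℝ) ^ 2)⁻¹ := by gcongr; exact hx.1

/-- The partial sum `∑_{n ≤ N} n^{-s}` of the Dirichlet series of `ζ`. -/
noncomputable def zetaPartialSum (s : ℂ) (N : ℕ) : ℂ := ∑ n ∈ Icc 1 N, (n : ℂ) ^ (-s)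

lemma zetaPartialSum_succ (s : ℂ) (N : ℕ) :
    zetaPartialSum s (N + 1) = zetaPartialSum s N + ((N + 1 : ℕ) : ℂ) ^ (-s) := by
  rw [zetaPartialSum, zetaPartialSum, sum_Icc_succ_top (by omega)]

/-- The Euler–Maclaurin approximation `∑_{n ≤ N} n^{-s} - N^{1-s}/(1-s)` to `ζ(s)`; at `s = 1`
the quotient is `0` by convention. -/
noncomputable def zetaApprox (s : ℂ) (N : ℕ) : ℂ :=
  zetaPartialSum s N - (N : ℂ) ^ (1 - s) / (1 - s)

lemma norm_zetaApprox_sub_zetaApprox_le {s : ℂ} (hs : 1 ≤ s.re) (hs1 : s ≠ 1) {N M : ℕ}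
    (hN : 1 ≤ N) (hM : N ≤ M) :
    ‖zetaApprox s M - zetaApprox s N‖ ≤ 2 * ‖s‖ * (1 / N - 1 / M) := by
  induction M, hM using Nat.le_induction with
  | base => simp
  | succ M hM ih =>
    have hM1 : (1 : ℝ) ≤ M := mod_cast hN.trans hM
    have hstep := norm_natCast_add_one_cpow_neg_sub_le hs hs1 (hN.trans hM)
    have hsplit : zetaApprox s (M + 1) - zetaApprox s N = (zetaApprox s M - zetaApprox s N) +
        (((M + 1 : ℕ) : ℂ) ^ (-s) -
          (((M + 1 : ℕ) : ℂ) ^ (1 - s) - (M : ℂ) ^ (1 - s)) / (1 - s)) := by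
      simp only [zetaApprox, zetaPartialSum_succ]; ring
    have htele : ‖s‖ / (M : ℝ) ^ 2 ≤ 2 * ‖s‖ * (1 / M - 1 / (M + 1 : ℕ)) := by
      have hdiff : (1 / M - 1 / (M + 1 : ℕ) : ℝ) = 1 / (M * (M + 1)) := by
        push_cast; field_simp; ring
      have hM2 : 1 / (M : ℝ) ^ 2 ≤ 2 * (1 / (M * (M + 1))) := by
        rw [mul_one_div, div_le_div_iff₀ (by positivity) (by positivity)]; nlinarith
      calc ‖s‖ / (M : ℝ) ^ 2 = ‖s‖ * (1 / (M : ℝ) ^ 2) := by ring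
        _ ≤ ‖s‖ * (2 * (1 / (M * (M + 1)))) := by gcongr
        _ = _ := by rw [hdiff]; ring
    rw [hsplit]
    linarith [norm_add_le_of_le ih hstep]

lemma tendsto_zetaApprox {s : ℂ} (hs : 1 < s.re) :
    Tendsto (zetaApprox s) atTop (nhds (riemannZeta s)) := by
  have hs0 : s ≠ 0 := by rintro rfl; norm_num at hs
  have hsum : Tendsto (zetaPartialSum s) atTop (nhds (riemannZeta s)) := by
    rw [zeta_eq_tsum_one_div_nat_cpow hs]
    refine ((Complex.summable_one_div_nat_cpow.2 hs).hasSum.tendsto_sum_nat.comp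
      (tendsto_add_atTop_nat 1)).congr fun M ↦ ?_
    simp only [Function.comp, zetaPartialSum]
    rw [range_eq_Ico, sum_eq_sum_Ico_succ_bot (by omega)]
    simp only [Nat.cast_zero, Complex.zero_cpow hs0, div_zero, zero_add]
    exact sum_congr (by ext; simp) fun n _ ↦ by rw [Complex.cpow_neg, one_div]
  have htail : Tendsto (fun M : ℕ ↦ (M : ℂ) ^ (1 - s) / (1 - s)) atTop (nhds 0) := by
    rw [tendsto_zero_iff_norm_tendsto_zero]
    have h : Tendsto (fun M : ℕ ↦ (M : ℝ) ^ (-(s.re - 1)) / ‖1 - s‖) atTop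
        (nhds (0 / ‖1 - s‖)) :=
      ((tendsto_rpow_neg_atTop (by linarith)).comp tendsto_natCast_atTop_atTop).div_const _
    rw [zero_div] at h
    refine h.congr' ?_
    filter_upwards [eventually_ge_atTop 1] with M hM
    rw [norm_div, Complex.norm_natCast_cpow_of_pos (by omega)]
    congr 2; simp
  simpa [zetaApprox] using! hsum.sub htail

lemma norm_riemannZeta_sub_zetaApprox_le_of_one_lt_re {s : ℂ} (hs : 1 < s.re) {N : ℕ}
    (hN : 1 ≤ N) : ‖riemannZeta s - zetaApprox s N‖ ≤ 2 * ‖s‖ / N := by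
  have hs1 : s ≠ 1 := by rintro rfl; simp at hs
  refine le_of_tendsto ((tendsto_zetaApprox hs).sub_const _).norm ?_
  filter_upwards [eventually_ge_atTop N] with M hM
  calc ‖zetaApprox s M - zetaApprox s N‖ ≤ 2 * ‖s‖ * (1 / N - 1 / M) :=
        norm_zetaApprox_sub_zetaApprox_le hs.le hs1 hN hM
    _ ≤ 2 * ‖s‖ * (1 / N) := by gcongr; exact sub_le_self _ (by positivity)
    _ = 2 * ‖s‖ / N := by ring

lemma continuousAt_zetaApprox {s : ℂ} (hs1 : s ≠ 1) {N : ℕ} (hN : N ≠ 0) :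
    ContinuousAt (fun z ↦ zetaApprox z N) s := by
  have hsum : ContinuousAt (fun z ↦ zetaPartialSum z N) s := by
    refine tendsto_finsetSum _ fun n hn ↦ ?_
    have hn0 : (n : ℂ) ≠ 0 := Nat.cast_ne_zero.2 (Nat.one_le_iff_ne_zero.1 (mem_Icc.1 hn).1)
    exact (continuousAt_const_cpow hn0).comp continuousAt_neg
  refine hsum.sub (ContinuousAt.div ?_ (by fun_prop) (sub_ne_zero.2 hs1.symm))
  exact (continuousAt_const_cpow (Nat.cast_ne_zero.2 hN)).comp (f := fun z ↦ 1 - z) (by fun_prop)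

lemma norm_riemannZeta_sub_zetaApprox_le {s : ℂ} (hs : 1 ≤ s.re) (hs1 : s ≠ 1) {N : ℕ}
    (hN : 1 ≤ N) : ‖riemannZeta s - zetaApprox s N‖ ≤ 2 * ‖s‖ / N := by
  have hpath : Tendsto (fun ε : ℝ ↦ s + ε) (nhdsWithin 0 (Set.Ioi 0)) (nhds s) := by
    have : Continuous fun ε : ℝ ↦ s + ε := by fun_prop
    simpa using (this.tendsto 0).mono_left (nhdsWithin_le_nhds (s := Set.Ioi 0))
  have hlhs := (((differentiableAt_riemannZeta hs1).continuousAt.tendsto.comp hpath).sub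
    ((continuousAt_zetaApprox hs1 (Nat.one_le_iff_ne_zero.1 hN)).tendsto.comp hpath)).norm
  refine le_of_tendsto_of_tendsto hlhs ((hpath.norm.const_mul 2).div_const (N : ℝ)) ?_
  filter_upwards [self_mem_nhdsWithin] with ε (hε : 0 < ε)
  exact norm_riemannZeta_sub_zetaApprox_le_of_one_lt_re (by simp; linarith) hN

lemma norm_natCast_cpow_neg_le_inv {n : ℕ} (hn : 1 ≤ n) {s : ℂ} (hs : 1 ≤ s.re) :
    ‖(n : ℂ) ^ (-s)‖ ≤ (n : ℝ)⁻¹ := by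
  rw [Complex.norm_natCast_cpow_of_pos (by omega), ← Real.rpow_neg_one]
  exact Real.rpow_le_rpow_of_exponent_le (by exact_mod_cast hn) (by simpa using hs)

lemma sum_Icc_inv_le_one_add_log (N : ℕ) : ∑ n ∈ Icc 1 N, (n : ℝ)⁻¹ ≤ 1 + Real.log N := by
  simpa [harmonic_eq_sum_Icc] using harmonic_le_one_add_log N

lemma norm_zetaPartialSum_le {s : ℂ} (hs : 1 ≤ s.re) (N : ℕ) :
    ‖zetaPartialSum s N‖ ≤ 1 + Real.log N :=
  calc ‖zetaPartialSum s N‖ ≤ ∑ n ∈ Icc 1 N, (n : ℝ)⁻¹ :=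
        norm_sum_le_of_le _ fun _ hn ↦ norm_natCast_cpow_neg_le_inv (mem_Icc.1 hn).1 hs
    _ ≤ 1 + Real.log N := sum_Icc_inv_le_one_add_log N

lemma norm_natCast_cpow_neg_add_sub_le {z : ℂ} (hz : 1 ≤ z.re) {σ : ℝ} (hσ : 0 ≤ σ) {n : ℕ}
    (hn : 1 ≤ n) :
    ‖(n : ℂ) ^ (-(z + σ)) - (n : ℂ) ^ (-z)‖ ≤ σ * Real.log n * (n : ℝ)⁻¹ := by
  have hn0 : (n : ℂ) ≠ 0 := Nat.cast_ne_zero.2 (by omega)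
  have hn1 : (1 : ℝ) ≤ n := mod_cast hn
  have hfactor : (n : ℂ) ^ (-(z + σ)) - (n : ℂ) ^ (-z) =
      (((n : ℝ) ^ (-σ) - 1 : ℝ) : ℂ) * (n : ℂ) ^ (-z) := by
    rw [show -(z + σ) = -z + ((-σ : ℝ) : ℂ) by push_cast; ring, Complex.cpow_add _ _ hn0,
      Complex.ofReal_sub, Complex.ofReal_cpow (by positivity)]
    push_cast; ring
  have hpow : ‖(n : ℝ) ^ (-σ) - 1‖ ≤ σ * Real.log n := by
    have hle : (n : ℝ) ^ (-σ) ≤ 1 := Real.rpow_le_one_of_one_le_of_nonpos hn1 (by linarith)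
    have hge := Real.add_one_le_exp (Real.log n * -σ)
    rw [← Real.rpow_def_of_pos (by positivity)] at hge
    rw [Real.norm_of_nonpos (by linarith)]
    linarith
  rw [hfactor, norm_mul, Complex.norm_real]
  exact mul_le_mul hpow (norm_natCast_cpow_neg_le_inv hn hz) (norm_nonneg _)
    ((norm_nonneg _).trans hpow)

lemma norm_zetaPartialSum_add_sub_le {z : ℂ} (hz : 1 ≤ z.re) {σ : ℝ} (hσ : 0 ≤ σ) (N : ℕ) :
    ‖zetaPartialSum (z + σ) N - zetaPartialSum z N‖ ≤ σ * (1 + Real.log N) ^ 2 := by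
  have : 0 ≤ Real.log N := Real.log_natCast_nonneg N
  calc ‖zetaPartialSum (z + σ) N - zetaPartialSum z N‖
      ≤ ∑ n ∈ Icc 1 N, σ * Real.log N * (n : ℝ)⁻¹ := by
        rw [zetaPartialSum, zetaPartialSum, ← sum_sub_distrib]
        refine norm_sum_le_of_le _ fun n hn ↦ ?_
        obtain ⟨hn1, hnN⟩ := mem_Icc.1 hn
        refine (norm_natCast_cpow_neg_add_sub_le hz hσ hn1).trans ?_
        gcongr
    _ = σ * (Real.log N * ∑ n ∈ Icc 1 N, (n : ℝ)⁻¹) := by rw [← mul_sum, mul_assoc]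
    _ ≤ σ * ((1 + Real.log N) * (1 + Real.log N)) := by
        gcongr
        · exact le_add_of_nonneg_left zero_le_one
        · exact sum_Icc_inv_le_one_add_log N
    _ = σ * (1 + Real.log N) ^ 2 := by ring

lemma norm_riemannZeta_sub_zetaPartialSum_le {σ τ : ℝ} (h0 : 0 ≤ σ) (h1 : σ ≤ 1) (hτ : 1 ≤ |τ|)
    {N : ℕ} (hN : τ ^ 2 ≤ N) :
    ‖riemannZeta (1 + τ * I + σ) - zetaPartialSum (1 + τ * I + σ) N‖ ≤ 7 / |τ| := by
  set s : ℂ := 1 + τ * I + σ with hs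
  have hτ0 : 0 < |τ| := by linarith
  have hre : 1 ≤ s.re := by simp [hs, h0]
  have hdist : |τ| ≤ ‖1 - s‖ := by simpa [hs] using Complex.abs_im_le_norm (1 - s)
  have hs1 : s ≠ 1 := by rintro h; rw [h, sub_self, norm_zero] at hdist; linarith
  have hNτ : |τ| ^ 2 ≤ N := by rwa [sq_abs]
  have hN0 : (0 : ℝ) < N := by nlinarith
  have hN1 : 1 ≤ N := by exact_mod_cast hN0
  have hnorm : ‖s‖ ≤ 3 * |τ| := by
    calc ‖s‖ ≤ ‖(1 : ℂ)‖ + ‖τ * I‖ + ‖(σ : ℂ)‖ := norm_add₃_le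
      _ = 1 + |τ| + σ := by simp [abs_of_nonneg h0]
      _ ≤ 3 * |τ| := by linarith
  have hmain : 2 * ‖s‖ / N ≤ 6 / |τ| := by
    rw [div_le_div_iff₀ hN0 hτ0]; nlinarith
  have htail : ‖(N : ℂ) ^ (1 - s) / (1 - s)‖ ≤ 1 / |τ| := by
    rw [norm_div, Complex.norm_natCast_cpow_of_pos hN1]
    gcongr
    exact Real.rpow_le_one_of_one_le_of_nonpos (by exact_mod_cast hN1) (by simpa using hre)
  calc ‖riemannZeta s - zetaPartialSum s N‖
      = ‖(riemannZeta s - zetaApprox s N) - (N : ℂ) ^ (1 - s) / (1 - s)‖ := by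
        rw [zetaApprox]; congr 1; ring
    _ ≤ 6 / |τ| + 1 / |τ| := norm_sub_le_of_le
        ((norm_riemannZeta_sub_zetaApprox_le hre hs1 hN1).trans hmain) htail
    _ = 7 / |τ| := by ring

lemma exists_nat_sq_le_and_log_le {R : ℝ} (hR : 1 ≤ |R|) :
    ∃ N : ℕ, R ^ 2 ≤ N ∧ Real.log N ≤ 1 + 2 * Real.log |R| := by
  rw [← sq_abs]
  refine ⟨⌈|R| ^ 2⌉₊, Nat.le_ceil _, ?_⟩
  have hle : (⌈|R| ^ 2⌉₊ : ℝ) ≤ 2 * |R| ^ 2 := by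
    have := (Nat.ceil_lt_add_one (show 0 ≤ |R| ^ 2 by positivity)).le
    nlinarith
  have hpos : (0 : ℝ) < ⌈|R| ^ 2⌉₊ := Nat.cast_pos.2 (Nat.ceil_pos.2 (by positivity))
  calc Real.log ⌈|R| ^ 2⌉₊ ≤ Real.log (2 * |R| ^ 2) := Real.log_le_log hpos hle
    _ = Real.log 2 + 2 * Real.log |R| := by
        rw [Real.log_mul (by norm_num) (by positivity), Real.log_pow]; norm_num
    _ ≤ 1 + 2 * Real.log |R| := by linarith [Real.log_two_lt_d9]

lemma norm_riemannZeta_le_log {σ τ : ℝ} (h0 : 0 ≤ σ) (h1 : σ ≤ 1) (hτ : 1 ≤ |τ|) :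
    ‖riemannZeta (1 + τ * I + σ)‖ ≤ 9 + 2 * Real.log |τ| := by
  obtain ⟨N, hN, hlog⟩ := exists_nat_sq_le_and_log_le hτ
  have happrox := norm_riemannZeta_sub_zetaPartialSum_le h0 h1 hτ hN
  have hsum : ‖zetaPartialSum (1 + τ * I + σ) N‖ ≤ 1 + Real.log N :=
    norm_zetaPartialSum_le (by simp [h0]) N
  have h7 : 7 / |τ| ≤ 7 := div_le_self (by norm_num) hτ
  linarith [norm_le_insert' (riemannZeta (1 + τ * I + σ)) (zetaPartialSum (1 + τ * I + σ) N)]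

lemma norm_riemannZeta_add_le {σ τ : ℝ} (h0 : 0 ≤ σ) (h1 : σ ≤ 1) (hτ : 1 ≤ |τ|) :
    ‖riemannZeta (1 + τ * I + σ)‖ ≤
      ‖riemannZeta (1 + τ * I)‖ + σ * (2 + 2 * Real.log |τ|) ^ 2 + 14 / |τ| := by
  obtain ⟨N, hN, hlog⟩ := exists_nat_sq_le_and_log_le hτ
  have hright := norm_riemannZeta_sub_zetaPartialSum_le h0 h1 hτ hN
  have hline := norm_riemannZeta_sub_zetaPartialSum_le le_rfl zero_le_one hτ hN
  rw [Complex.ofReal_zero, add_zero] at hline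
  have hsums : ‖zetaPartialSum (1 + τ * I + σ) N - zetaPartialSum (1 + τ * I) N‖ ≤
      σ * (2 + 2 * Real.log |τ|) ^ 2 := by
    refine (norm_zetaPartialSum_add_sub_le (by simp) h0 N).trans ?_
    have := Real.log_natCast_nonneg N
    gcongr σ * ?_ ^ 2
    linarith
  rw [norm_sub_rev] at hline
  have htri := norm_add_le_of_le (norm_add_le_of_le hright hsums) hline
  rw [sub_add_sub_cancel, sub_add_sub_cancel] at htri
  have h14 : 14 / |τ| = 7 / |τ| + 7 / |τ| := by ring
  linarith [norm_le_insert' (riemannZeta (1 + τ * I + σ)) (riemannZeta (1 + τ * I))]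

lemma norm_riemannZeta_one_add_sub_le {σ : ℝ} (h0 : 0 < σ) :
    ‖riemannZeta (1 + σ) - ((1 + 1 / σ : ℝ) : ℂ)‖ ≤ 2 * (1 + σ) := by
  have h := norm_riemannZeta_sub_zetaApprox_le_of_one_lt_re
    (show 1 < (1 + σ : ℂ).re by simp [h0]) le_rfl
  have hnorm : ‖(1 + σ : ℂ)‖ = 1 + σ := by
    simpa using Complex.norm_of_nonneg (show 0 ≤ 1 + σ by linarith)
  simpa [zetaApprox, zetaPartialSum, hnorm] using h

lemma norm_riemannZeta_one_add_le {σ : ℝ} (h0 : 0 < σ) (h1 : σ ≤ 1) :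
    ‖riemannZeta (1 + σ)‖ ≤ 6 / σ := by
  have happrox := norm_riemannZeta_one_add_sub_le h0
  have hval : ‖((1 + 1 / σ : ℝ) : ℂ)‖ = 1 + 1 / σ := Complex.norm_of_nonneg (by positivity)
  have hσ : 1 ≤ 1 / σ := (one_le_div h0).2 h1
  have h6 : 6 / σ = 6 * (1 / σ) := by ring
  linarith [norm_le_insert' (riemannZeta (1 + σ)) ((1 + 1 / σ : ℝ) : ℂ)]

lemma one_le_norm_riemannZeta_three_four_one {σ : ℝ} (h0 : 0 < σ) (τ : ℝ) :
    1 ≤ ‖riemannZeta (1 + σ)‖ ^ 3 * ‖riemannZeta (1 + τ * I + σ)‖ ^ 4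
      * ‖riemannZeta (1 + (2 * τ : ℝ) * I + σ)‖ := by
  have h := DirichletCharacter.norm_LFunction_product_ge_one (N := 1) 1 h0 τ
  rw [DirichletCharacter.LFunctionTrivChar, one_pow] at h
  simp only [DirichletCharacter.LFunction_modOne_eq, norm_mul, norm_pow] at h
  have h₁ : (1 + σ + I * τ : ℂ) = 1 + τ * I + σ := by ring
  have h₂ : (1 + σ + 2 * I * τ : ℂ) = 1 + (2 * τ : ℝ) * I + σ := by push_cast; ring
  rwa [h₁, h₂] at h

/-- Take `σ = |τ|^{-1/2}` in the 3-4-1 inequality: if `|ζ(1 + iτ)|` were at most `σ`, the product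
would be `O(σ⁻³ (σ log² |τ|)⁴ log |τ|) = O(σ log⁹ |τ|)`. -/
lemma abs_le_log_pow_of_norm_riemannZeta_le {τ : ℝ} (hlog : 20 ≤ Real.log |τ|)
    (hζ : ‖riemannZeta (1 + τ * I)‖ ≤ 1 / √|τ|) :
    |τ| ≤ (6 ^ 3 * 6 ^ 4 * 3 * Real.log |τ| ^ 9) ^ 2 := by
  have hτ0 : 0 < |τ| := abs_pos.2 (by rintro rfl; norm_num at hlog)
  have hτ1 : 1 ≤ |τ| := by
    by_contra! h
    linarith [Real.log_nonpos hτ0.le h.le]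
  set l := Real.log |τ|
  set q := √|τ|
  have hqq : q * q = |τ| := Real.mul_self_sqrt hτ0.le
  have hq1 : 1 ≤ q := Real.one_le_sqrt.2 hτ1
  have hq0 : 0 < q := by linarith
  have hσ0 : 0 < 1 / q := by positivity
  have hσ1 : 1 / q ≤ 1 := (div_le_one hq0).2 hq1
  have hreal : ‖riemannZeta (1 + (1 / q : ℝ))‖ ≤ 6 * q :=
    (norm_riemannZeta_one_add_le hσ0 hσ1).trans_eq (by field_simp)
  have hτσ : ‖riemannZeta (1 + τ * I + (1 / q : ℝ))‖ ≤ 6 * l ^ 2 / q := by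
    have hdecay : 14 / |τ| ≤ 14 / q := by gcongr; nlinarith
    calc ‖riemannZeta (1 + τ * I + (1 / q : ℝ))‖
        ≤ 1 / q + 1 / q * (2 + 2 * l) ^ 2 + 14 / q := by
          linarith [norm_riemannZeta_add_le hσ0.le hσ1 hτ1]
      _ = (15 + (2 + 2 * l) ^ 2) / q := by ring
      _ ≤ 6 * l ^ 2 / q := by gcongr; nlinarith
  have h2τσ : ‖riemannZeta (1 + (2 * τ : ℝ) * I + (1 / q : ℝ))‖ ≤ 3 * l := by
    have hlog2 : Real.log |2 * τ| = Real.log 2 + l := by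
      rw [abs_mul, abs_two, Real.log_mul two_ne_zero hτ0.ne']
    linarith [norm_riemannZeta_le_log (τ := 2 * τ) hσ0.le hσ1
      (by rw [abs_mul, abs_two]; linarith), Real.log_two_lt_d9]
  have hprod : 1 ≤ (6 * q) ^ 3 * (6 * l ^ 2 / q) ^ 4 * (3 * l) :=
    (one_le_norm_riemannZeta_three_four_one hσ0 τ).trans (by gcongr)
  have hq_le : q ≤ 6 ^ 3 * 6 ^ 4 * 3 * l ^ 9 := by
    rwa [show (6 * q) ^ 3 * (6 * l ^ 2 / q) ^ 4 * (3 * l) = 6 ^ 3 * 6 ^ 4 * 3 * l ^ 9 / q by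
      field_simp, one_le_div hq0] at hprod
  rw [← hqq, ← sq]
  gcongr

lemma exists_inv_sqrt_le_norm_riemannZeta : ∃ T : ℝ, ∀ τ : ℝ, T ≤ |τ| →
    1 / √|τ| ≤ ‖riemannZeta (1 + τ * I)‖ := by
  set K : ℝ := 6 ^ 3 * 6 ^ 4 * 3 with hK
  have hpow := (Real.isLittleO_pow_log_id_atTop (n := 18)).bound
    (show (0 : ℝ) < 1 / (2 * K ^ 2) by positivity)
  obtain ⟨T, hT⟩ := eventually_atTop.1
    ((hpow.and (Real.tendsto_log_atTop.eventually_ge_atTop 20)).and (eventually_gt_atTop 0))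
  refine ⟨T, fun τ hτ ↦ ?_⟩
  obtain ⟨⟨hsmall, hlog⟩, hτ0⟩ := hT |τ| hτ
  by_contra! hζ
  rw [id, Real.norm_of_nonneg hτ0.le, Real.norm_of_nonneg (by positivity)] at hsmall
  have hcontra : (K * Real.log |τ| ^ 9) ^ 2 ≤ |τ| / 2 :=
    calc (K * Real.log |τ| ^ 9) ^ 2 = K ^ 2 * Real.log |τ| ^ 18 := by ring
      _ ≤ K ^ 2 * (1 / (2 * K ^ 2) * |τ|) := by gcongr
      _ = |τ| / 2 := by field_simp
  linarith [hcontra, abs_le_log_pow_of_norm_riemannZeta_le hlog hζ.le]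

lemma continuousAt_riemannZeta_one_add_mul_I {τ : ℝ} (hτ : τ ≠ 0) :
    ContinuousAt (fun τ : ℝ ↦ riemannZeta (1 + τ * I)) τ :=
  ContinuousAt.comp (f := fun τ : ℝ ↦ (1 + τ * I : ℂ))
    (differentiableAt_riemannZeta (by simpa using hτ)).continuousAt (by fun_prop)

lemma exists_div_sqrt_le_norm_riemannZeta {t₀ : ℝ} (ht₀ : 0 < t₀) :
    ∃ c : ℝ, 0 < c ∧ ∀ τ : ℝ, t₀ ≤ |τ| → c / √|τ| ≤ ‖riemannZeta (1 + τ * I)‖ := by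
  obtain ⟨T, hT⟩ := exists_inv_sqrt_le_norm_riemannZeta
  set S : Set ℝ := {τ | t₀ ≤ |τ|} ∩ Set.Icc (-T) T
  have hcompact : IsCompact S :=
    isCompact_Icc.inter_left (isClosed_le continuous_const continuous_abs)
  have habs : ∀ τ ∈ S, 0 < |τ| := fun τ hτ ↦ ht₀.trans_le hτ.1
  have hcont : ContinuousOn (fun τ : ℝ ↦ ‖riemannZeta (1 + τ * I)‖ * √|τ|) S := fun τ hτ ↦
    ((continuousAt_riemannZeta_one_add_mul_I (abs_pos.1 (habs τ hτ))).norm.mul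
      (by fun_prop)).continuousWithinAt
  have hpos : ∀ τ ∈ S, 0 < ‖riemannZeta (1 + τ * I)‖ * √|τ| := fun τ hτ ↦
    mul_pos (norm_pos_iff.2 (riemannZeta_ne_zero_of_one_le_re (by simp)))
      (Real.sqrt_pos.2 (habs τ hτ))
  obtain ⟨c, hc, hcS⟩ : ∃ c : ℝ, 0 < c ∧ ∀ τ ∈ S, c ≤ ‖riemannZeta (1 + τ * I)‖ * √|τ| := by
    rcases S.eq_empty_or_nonempty with h | h
    · exact ⟨1, one_pos, by simp [h]⟩
    · obtain ⟨τ₁, hτ₁, hmin⟩ := hcompact.exists_isMinOn h hcont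
      exact ⟨_, hpos τ₁ hτ₁, fun τ hτ ↦ hmin hτ⟩
  refine ⟨min c 1, by positivity, fun τ hτ ↦ ?_⟩
  have hτ0 : 0 < |τ| := ht₀.trans_le hτ
  rcases le_total |τ| T with h | h
  · rw [div_le_iff₀ (by positivity)]
    exact (min_le_left _ _).trans (hcS τ ⟨hτ, abs_le.1 h⟩)
  · refine le_trans ?_ (hT τ h)
    gcongr
    exact min_le_right _ _

/-! ### Twisted sums of the von Mangoldt function -/

lemma sum_Icc_sum_divisorsAntidiagonal {R : Type*} [Semiring R] (a b : ℕ → R) (N : ℕ) :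
    ∑ n ∈ Icc 1 N, ∑ x ∈ n.divisorsAntidiagonal, a x.1 * b x.2
      = ∑ d ∈ Icc 1 N, a d * ∑ m ∈ Icc 1 (N / d), b m := by
  let A : ArithmeticFunction R := ⟨fun n ↦ if n = 0 then 0 else a n, by simp⟩
  let B : ArithmeticFunction R := ⟨fun n ↦ if n = 0 then 0 else b n, by simp⟩
  have hA : ∀ n ≠ 0, A n = a n := fun n hn ↦ by simp [A, hn]
  have hB : ∀ n ≠ 0, B n = b n := fun n hn ↦ by simp [B, hn]
  have hpos : ∀ {N n : ℕ}, n ∈ Icc 1 N → n ≠ 0 := fun hn ↦ by have := mem_Icc.1 hn; omega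
  calc _ = ∑ n ∈ Icc 1 N, (A * B) n := by
        refine sum_congr rfl fun n _ ↦ ?_
        rw [ArithmeticFunction.mul_apply]
        refine sum_congr rfl fun x hx ↦ ?_
        obtain ⟨hx1, hx2⟩ := Nat.ne_zero_of_mem_divisorsAntidiagonal hx
        rw [hA _ hx1, hB _ hx2]
    _ = ∑ d ∈ Icc 1 N, A d * ∑ m ∈ Icc 1 (N / d), B m :=
        ArithmeticFunction.sum_Ioc_mul_eq_sum_sum A B N
    _ = _ := sum_congr rfl fun d hd ↦ by
        rw [hA d (hpos hd), sum_congr rfl fun m hm ↦ hB m (hpos hm)]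

lemma sum_divisorsAntidiagonal_vonMangoldt (n : ℕ) :
    ∑ x ∈ n.divisorsAntidiagonal, Λ x.1 = Real.log n := by
  rw [← ArithmeticFunction.vonMangoldt_sum, Nat.sum_divisorsAntidiagonal (fun i _ ↦ Λ i)]

lemma sum_vonMangoldt_le (N : ℕ) : ∑ n ∈ Icc 1 N, Λ n ≤ 6 * N := by
  have hψ := Chebyshev.psi_le_const_mul_self (x := N) N.cast_nonneg
  rw [Chebyshev.psi, Nat.floor_natCast] at hψ
  have hlog : Real.log 4 = 2 * Real.log 2 := by
    rw [show (4 : ℝ) = 2 ^ 2 by norm_num, Real.log_pow, Nat.cast_two]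
  exact hψ.trans (by gcongr; linarith [Real.log_two_lt_d9])

lemma sum_log_eq_sum_vonMangoldt_mul (N : ℕ) :
    ∑ n ∈ Icc 1 N, Real.log n = ∑ d ∈ Icc 1 N, Λ d * ((N / d : ℕ) : ℝ) := by
  simpa only [ArithmeticFunction.vonMangoldt_mul_zeta, ArithmeticFunction.log_apply] using!
    ArithmeticFunction.sum_Ioc_mul_zeta_eq_sum Λ N

lemma mul_log_sub_le_sum_log (N : ℕ) : N * Real.log N - N ≤ ∑ n ∈ Icc 1 N, Real.log n := by
  rcases eq_or_ne N 0 with rfl | hN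
  · simp
  have hsum : ∑ n ∈ Icc 1 N, Real.log n = Real.log N.factorial := by
    rw [← prod_Ico_id_eq_factorial, Ico_add_one_right_eq_Icc, Nat.cast_prod, Real.log_prod]
    exact fun n hn ↦ Nat.cast_ne_zero.2 (by have := mem_Icc.1 hn; omega)
  have hlogN : 0 ≤ Real.log N := Real.log_natCast_nonneg N
  have hlogπ : 0 ≤ Real.log (2 * Real.pi) := Real.log_nonneg (by linarith [Real.pi_gt_three])
  linarith [Stirling.le_log_factorial_stirling hN]

lemma sum_log_le_mul_log (N : ℕ) : ∑ n ∈ Icc 1 N, Real.log n ≤ N * Real.log N :=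
  calc _ ≤ ∑ _n ∈ Icc 1 N, Real.log N := sum_le_sum fun _ hn ↦ by
        obtain ⟨hn1, hnN⟩ := mem_Icc.1 hn
        gcongr
    _ = _ := by simp

lemma div_lt_natCast_div_add_one (m n : ℕ) : (m : ℝ) / n < (m / n : ℕ) + 1 := by
  simpa only [Nat.floor_div_eq_div] using Nat.lt_floor_add_one ((m : ℝ) / n)

lemma abs_sum_vonMangoldt_div_sub_log_le (N : ℕ) :
    |∑ n ∈ Icc 1 N, Λ n / n - Real.log N| ≤ 6 := by
  rcases Nat.eq_zero_or_pos N with rfl | hN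
  · simp
  have hsum : N * ∑ n ∈ Icc 1 N, Λ n / n = ∑ n ∈ Icc 1 N, Λ n * (N / n) := by
    rw [mul_sum]; exact sum_congr rfl fun n _ ↦ by ring
  have hlower : ∑ n ∈ Icc 1 N, Real.log n ≤ N * ∑ n ∈ Icc 1 N, Λ n / n := by
    rw [sum_log_eq_sum_vonMangoldt_mul, hsum]
    gcongr
    exact Nat.cast_div_le
  have hupper : N * ∑ n ∈ Icc 1 N, Λ n / n ≤ ∑ n ∈ Icc 1 N, Real.log n + 6 * N := by
    have hterm : ∀ n ∈ Icc 1 N, Λ n * (N / n) ≤ Λ n * ((N / n : ℕ) : ℝ) + Λ n := fun n _ ↦ by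
      nlinarith [ArithmeticFunction.vonMangoldt_nonneg (n := n), div_lt_natCast_div_add_one N n]
    calc _ = ∑ n ∈ Icc 1 N, Λ n * (N / n) := hsum
      _ ≤ ∑ n ∈ Icc 1 N, Λ n * ((N / n : ℕ) : ℝ) + ∑ n ∈ Icc 1 N, Λ n :=
          (sum_le_sum hterm).trans_eq sum_add_distrib
      _ ≤ _ := by rw [sum_log_eq_sum_vonMangoldt_mul]; gcongr; exact sum_vonMangoldt_le N
  have hN0 : (0 : ℝ) < N := mod_cast hN
  refine abs_le.2 ⟨?_, ?_⟩ <;> refine le_of_mul_le_mul_left ?_ hN0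
  · linarith [mul_log_sub_le_sum_log N]
  · linarith [sum_log_le_mul_log N]

/-- The partial sum `∑_{n ≤ N} Λ(n) n^{-s}` of the Dirichlet series of `-ζ'/ζ`. -/
noncomputable def vonMangoldtPartialSum (s : ℂ) (N : ℕ) : ℂ :=
  ∑ n ∈ Icc 1 N, (Λ n : ℂ) * (n : ℂ) ^ (-s)

lemma ofReal_inv_mul_cpow {x : ℝ} (hx : 0 < x) (z : ℂ) :
    ((x⁻¹ : ℝ) : ℂ) * (x : ℂ) ^ z = (x : ℂ) ^ (z - 1) := by
  rw [Complex.cpow_sub _ _ (mod_cast hx.ne'), Complex.cpow_one, Complex.ofReal_inv]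
  ring

lemma hasDerivAt_log_mul_cpow {x : ℝ} (hx : 0 < x) {z : ℂ} (hz : z ≠ 0) :
    HasDerivAt (fun x : ℝ ↦ (Real.log x : ℂ) * (x : ℂ) ^ z)
      ((1 + z * Real.log x) * (x : ℂ) ^ (z - 1)) x := by
  refine ((Real.hasDerivAt_log hx.ne').ofReal_comp.mul
    (hasDerivAt_ofReal_cpow_const hx.ne' hz)).congr_deriv ?_
  rw [ofReal_inv_mul_cpow hx]
  ring

/-- A primitive of `x ↦ log x · x ^ (z - 1)`, for `z ≠ 0`. -/
noncomputable def logCpowPrimitive (z : ℂ) (x : ℝ) : ℂ :=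
  Real.log x * (x : ℂ) ^ z / z - (x : ℂ) ^ z / z ^ 2

lemma hasDerivAt_logCpowPrimitive {x : ℝ} (hx : 0 < x) {z : ℂ} (hz : z ≠ 0) :
    HasDerivAt (logCpowPrimitive z) (Real.log x * (x : ℂ) ^ (z - 1)) x := by
  refine (((hasDerivAt_log_mul_cpow hx hz).div_const z).sub
    ((hasDerivAt_ofReal_cpow_const hx.ne' hz).div_const (z ^ 2))).congr_deriv ?_
  field_simp
  ring

lemma one_le_norm_of_one_le_re {s : ℂ} (hs : 1 ≤ s.re) : 1 ≤ ‖s‖ :=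
  hs.trans (Complex.re_le_norm s)

lemma norm_one_sub_mul_log_mul_cpow_le {s : ℂ} (hs : s.re = 1) {x : ℝ} (hx : 1 ≤ x) :
    ‖(1 + -s * Real.log x) * (x : ℂ) ^ (-s - 1)‖ ≤ 3 * ‖s‖ * x ^ (-(3 / 2) : ℝ) := by
  have hx0 : 0 < x := by linarith
  have hs1 : 1 ≤ ‖s‖ := one_le_norm_of_one_le_re hs.ge
  have hlog0 : 0 ≤ Real.log x := Real.log_nonneg hx
  have hlog : 1 + Real.log x ≤ 2 * √x := by
    have := Real.log_le_sub_one_of_pos (Real.sqrt_pos.2 hx0)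
    rw [Real.log_sqrt hx0.le] at this
    linarith
  have hfactor : ‖1 + -s * Real.log x‖ ≤ 3 * ‖s‖ * √x :=
    calc _ ≤ 1 + ‖s‖ * Real.log x := by
          refine (norm_add_le _ _).trans_eq ?_
          rw [norm_mul, Complex.norm_real, Real.norm_of_nonneg hlog0, norm_neg, norm_one]
      _ ≤ ‖s‖ * (1 + Real.log x) := by linarith
      _ ≤ ‖s‖ * (3 * √x) := by gcongr; linarith [Real.sqrt_nonneg x]
      _ = _ := by ring
  have hre : (-s - 1).re = -2 := by
    rw [Complex.sub_re, Complex.neg_re, hs, Complex.one_re]; norm_num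
  rw [norm_mul, Complex.norm_cpow_eq_rpow_re_of_pos hx0, hre]
  calc _ ≤ 3 * ‖s‖ * √x * x ^ (-2 : ℝ) := by gcongr
    _ = _ := by rw [Real.sqrt_eq_rpow, mul_assoc, ← Real.rpow_add hx0]; norm_num

lemma norm_log_mul_cpow_sub_logCpowPrimitive_sub_le {s : ℂ} (hs : s.re = 1) (hs1 : s ≠ 1) {n : ℕ}
    (hn : 1 ≤ n) :
    ‖(Real.log (n + 1 : ℕ) : ℂ) * ((n + 1 : ℕ) : ℂ) ^ (-s)
      - (logCpowPrimitive (1 - s) (n + 1 : ℕ) - logCpowPrimitive (1 - s) n)‖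
      ≤ 3 * ‖s‖ * (n : ℝ) ^ (-(3 / 2) : ℝ) := by
  have hn1 : (1 : ℝ) ≤ n := mod_cast hn
  have hs0 : s ≠ 0 := by rintro rfl; norm_num at hs
  have key := norm_sub_primitive_sub_le (a := n) (C := 3 * ‖s‖ * (n : ℝ) ^ (-(3 / 2) : ℝ))
    (φ := fun x : ℝ ↦ (Real.log x : ℂ) * (x : ℂ) ^ (-s)) (G := logCpowPrimitive (1 - s))
    (φ' := fun x : ℝ ↦ (1 + -s * Real.log x) * (x : ℂ) ^ (-s - 1)) ?_ ?_ ?_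
  · simpa only [Nat.cast_add, Nat.cast_one, Complex.ofReal_add, Complex.ofReal_natCast,
      Complex.ofReal_one] using key
  · intro x hx
    have := hasDerivAt_logCpowPrimitive (by linarith [hx.1] : 0 < x) (sub_ne_zero.2 hs1.symm)
    rwa [show 1 - s - 1 = -s by ring] at this
  · exact fun x hx ↦ hasDerivAt_log_mul_cpow (by linarith [hx.1]) (neg_ne_zero.2 hs0)
  · intro x hx
    refine (norm_one_sub_mul_log_mul_cpow_le hs (hn1.trans hx.1)).trans ?_
    gcongr 3 * ‖s‖ * ?_
    exact Real.rpow_le_rpow_of_nonpos (by linarith) hx.1 (by norm_num)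

lemma norm_natCast_cpow_one_sub {s : ℂ} (hs : s.re = 1) {n : ℕ} (hn : 1 ≤ n) :
    ‖(n : ℂ) ^ (1 - s)‖ = 1 := by
  rw [Complex.norm_natCast_cpow_of_pos hn, Complex.sub_re, hs, Complex.one_re, sub_self,
    Real.rpow_zero]

lemma exists_norm_sum_log_mul_cpow_sub_logCpowPrimitive_le : ∃ C : ℝ, 0 ≤ C ∧ ∀ s : ℂ,
    s.re = 1 → s ≠ 1 → ∀ N : ℕ, 1 ≤ N →
    ‖∑ n ∈ Icc 1 N, (Real.log n : ℂ) * (n : ℂ) ^ (-s)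
      - (logCpowPrimitive (1 - s) N - logCpowPrimitive (1 - s) 1)‖ ≤ C * ‖s‖ := by
  refine ⟨3 * ∑' n : ℕ, (n : ℝ) ^ (-(3 / 2) : ℝ), by positivity, fun s hs hs1 N hN ↦ ?_⟩
  have hsum : Summable fun n : ℕ ↦ (n : ℝ) ^ (-(3 / 2) : ℝ) :=
    Real.summable_nat_rpow.2 (by norm_num)
  calc _ ≤ ∑ n ∈ Ico 1 N, 3 * ‖s‖ * (n : ℝ) ^ (-(3 / 2) : ℝ) := by
        induction N, hN using Nat.le_induction with
        | base => simp
        | succ N hN ih =>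
          rw [sum_Icc_succ_top (by omega), sum_Ico_succ_top hN]
          refine (norm_add_le_of_le ih
            (norm_log_mul_cpow_sub_logCpowPrimitive_sub_le hs hs1 hN)).trans' (le_of_eq ?_)
          congr 1
          ring
    _ = 3 * ‖s‖ * ∑ n ∈ Ico 1 N, (n : ℝ) ^ (-(3 / 2) : ℝ) := (mul_sum _ _ _).symm
    _ ≤ 3 * ‖s‖ * ∑' n : ℕ, (n : ℝ) ^ (-(3 / 2) : ℝ) := by
        gcongr
        exact hsum.sum_le_tsum _ fun n _ ↦ by positivity
    _ = _ := by ring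

lemma exists_norm_sum_log_mul_cpow_sub_le : ∃ C : ℝ, 0 ≤ C ∧ ∀ s : ℂ, s.re = 1 → s ≠ 1 →
    ∀ N : ℕ, 1 ≤ N →
    ‖∑ n ∈ Icc 1 N, (Real.log n : ℂ) * (n : ℂ) ^ (-s)
      - Real.log N * ((N : ℂ) ^ (1 - s) / (1 - s))‖ ≤ C * ‖s‖ + 2 / ‖1 - s‖ ^ 2 := by
  obtain ⟨C, hC, hbound⟩ := exists_norm_sum_log_mul_cpow_sub_logCpowPrimitive_le
  refine ⟨C, hC, fun s hs hs1 N hN ↦ ?_⟩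
  have hboundary : ∀ n : ℕ, 1 ≤ n → ‖(n : ℂ) ^ (1 - s) / (1 - s) ^ 2‖ ≤ 1 / ‖1 - s‖ ^ 2 :=
    fun n hn ↦ by rw [norm_div, norm_pow, norm_natCast_cpow_one_sub hs hn]
  calc _ = ‖(∑ n ∈ Icc 1 N, (Real.log n : ℂ) * (n : ℂ) ^ (-s)
          - (logCpowPrimitive (1 - s) N - logCpowPrimitive (1 - s) 1))
        - (N : ℂ) ^ (1 - s) / (1 - s) ^ 2 + ((1 : ℕ) : ℂ) ^ (1 - s) / (1 - s) ^ 2‖ := by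
        congr 1
        simp only [logCpowPrimitive, Complex.ofReal_natCast, Real.log_one, Complex.ofReal_zero,
          Complex.ofReal_one, Nat.cast_one]
        ring
    _ ≤ C * ‖s‖ + 1 / ‖1 - s‖ ^ 2 + 1 / ‖1 - s‖ ^ 2 :=
        norm_add_le_of_le (norm_sub_le_of_le (hbound s hs hs1 N hN) (hboundary N hN))
          (hboundary 1 le_rfl)
    _ = _ := by ring

lemma norm_cpow_sub_cpow_le {z : ℂ} (hz : z.re = 0) {x y : ℝ} (hx : 0 < x) (hy : 0 < y) :
    ‖(x : ℂ) ^ z - (y : ℂ) ^ z‖ ≤ ‖z‖ * |Real.log x - Real.log y| := by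
  have hpolar : ∀ u : ℝ, 0 < u → (u : ℂ) ^ z = Complex.exp (I * (z.im * Real.log u : ℝ)) :=
    fun u hu ↦ by
      rw [Complex.cpow_def_of_ne_zero (mod_cast hu.ne'), ← Complex.ofReal_log hu.le,
        ← Complex.re_add_im z, hz]
      congr 1
      simp
      ring
  have hfactor : (x : ℂ) ^ z - (y : ℂ) ^ z = (y : ℂ) ^ z *
      (Complex.exp (I * (z.im * (Real.log x - Real.log y) : ℝ)) - 1) := by
    rw [hpolar x hx, hpolar y hy, mul_sub, ← Complex.exp_add]
    push_cast
    ring_nf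
  calc _ = ‖Complex.exp (I * (z.im * (Real.log x - Real.log y) : ℝ)) - 1‖ := by
        rw [hfactor, norm_mul, Complex.norm_cpow_eq_rpow_re_of_pos hy, hz, Real.rpow_zero, one_mul]
    _ ≤ |z.im| * |Real.log x - Real.log y| := by
        rw [← abs_mul]; exact Real.norm_exp_I_mul_ofReal_sub_one_le
    _ ≤ _ := by gcongr; exact Complex.abs_im_le_norm z

lemma inv_natCast_div_le {N d : ℕ} (hd : 1 ≤ d) (hdN : d ≤ N) :
    (((N / d : ℕ) : ℝ))⁻¹ ≤ 2 * d / N := by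
  have hq : 1 ≤ N / d := (Nat.one_le_div_iff hd).2 hdN
  have hlt : N < 2 * d * (N / d) := by nlinarith [Nat.lt_mul_div_succ N hd]
  have hq0 : (0 : ℝ) < (N / d : ℕ) := mod_cast hq
  have hN0 : (0 : ℝ) < N := mod_cast hd.trans hdN
  rw [inv_le_iff_one_le_mul₀ hq0, div_mul_eq_mul_div, le_div_iff₀ hN0, one_mul]
  exact_mod_cast hlt.le

lemma abs_log_natCast_div_sub_log_le {N d : ℕ} (hd : 1 ≤ d) (hdN : d ≤ N) :
    |Real.log (N / d : ℕ) - Real.log (N / d)| ≤ (((N / d : ℕ) : ℝ))⁻¹ := by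
  have hd0 : (0 : ℝ) < d := mod_cast hd
  have hN0 : (0 : ℝ) < N := hd0.trans_le (mod_cast hdN)
  set q : ℕ := N / d
  have hq0 : (0 : ℝ) < q := by exact_mod_cast (Nat.one_le_div_iff hd).2 hdN
  have hle : Real.log q ≤ Real.log (N / d) := Real.log_le_log hq0 Nat.cast_div_le
  have hlt : (N : ℝ) / d / q ≤ 1 + (q : ℝ)⁻¹ := by
    rw [div_le_iff₀ hq0, add_mul, inv_mul_cancel₀ hq0.ne', one_mul]
    exact (div_lt_natCast_div_add_one N d).le
  have hlog := Real.log_le_sub_one_of_pos (show 0 < (N : ℝ) / d / q by positivity)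
  rw [Real.log_div (by positivity) hq0.ne'] at hlog
  rw [abs_of_nonpos (by linarith)]
  linarith

lemma norm_zetaPartialSum_natDiv_sub_le {s : ℂ} (hs : s.re = 1) (hs1 : s ≠ 1) {N d : ℕ}
    (hd : 1 ≤ d) (hdN : d ≤ N) :
    ‖zetaPartialSum s (N / d) - (riemannZeta s + ((N / d : ℝ) : ℂ) ^ (1 - s) / (1 - s))‖
      ≤ 6 * ‖s‖ * d / N := by
  have hd0 : (0 : ℝ) < d := mod_cast hd
  have hN0 : (0 : ℝ) < N := hd0.trans_le (mod_cast hdN)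
  have hq := inv_natCast_div_le hd hdN
  have hlog := abs_log_natCast_div_sub_log_le hd hdN
  have hq1 : 1 ≤ N / d := (Nat.one_le_div_iff hd).2 hdN
  have hzeta := norm_riemannZeta_sub_zetaApprox_le hs.ge hs1 hq1
  set q : ℕ := N / d
  have hpow : ‖((q : ℂ) ^ (1 - s) - ((N / d : ℝ) : ℂ) ^ (1 - s)) / (1 - s)‖ ≤ (q : ℝ)⁻¹ := by
    rw [norm_div, div_le_iff₀' (norm_pos_iff.2 (sub_ne_zero.2 hs1.symm)), ← Complex.ofReal_natCast]
    refine (norm_cpow_sub_cpow_le (by simp [hs]) (mod_cast hq1) (by positivity)).trans ?_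
    gcongr
  calc _ = ‖((q : ℂ) ^ (1 - s) - ((N / d : ℝ) : ℂ) ^ (1 - s)) / (1 - s)
        - (riemannZeta s - zetaApprox s q)‖ := by rw [zetaApprox]; congr 1; ring
    _ ≤ (q : ℝ)⁻¹ + 2 * ‖s‖ / q := norm_sub_le_of_le hpow hzeta
    _ = (1 + 2 * ‖s‖) * (q : ℝ)⁻¹ := by ring
    _ ≤ (3 * ‖s‖) * (2 * d / N) := by gcongr; linarith [one_le_norm_of_one_le_re hs.ge]
    _ = _ := by ring

lemma sum_log_mul_cpow_eq (s : ℂ) (N : ℕ) :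
    ∑ n ∈ Icc 1 N, (Real.log n : ℂ) * (n : ℂ) ^ (-s)
      = ∑ d ∈ Icc 1 N, (Λ d : ℂ) * (d : ℂ) ^ (-s) * zetaPartialSum s (N / d) := by
  simp only [zetaPartialSum]
  rw [← sum_Icc_sum_divisorsAntidiagonal]
  refine sum_congr rfl fun n _ ↦ ?_
  rw [← sum_divisorsAntidiagonal_vonMangoldt, Complex.ofReal_sum, sum_mul]
  refine sum_congr rfl fun x hx ↦ ?_
  rw [← (Nat.mem_divisorsAntidiagonal.1 hx).1, Nat.cast_mul, Complex.natCast_mul_natCast_cpow]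
  ring

lemma natCast_cpow_neg_mul_div_cpow {d : ℕ} (hd : 1 ≤ d) (N : ℕ) (s : ℂ) :
    (d : ℂ) ^ (-s) * ((N / d : ℝ) : ℂ) ^ (1 - s) = (N : ℂ) ^ (1 - s) / d := by
  have hd0 : (d : ℂ) ≠ 0 := mod_cast (by omega : d ≠ 0)
  rw [Complex.ofReal_div, Complex.div_cpow_ofReal_nonneg N.cast_nonneg d.cast_nonneg,
    Complex.ofReal_natCast, Complex.ofReal_natCast, Complex.cpow_sub _ _ hd0, Complex.cpow_one,
    Complex.cpow_neg]
  have hds : (d : ℂ) ^ s ≠ 0 := by simp [Complex.cpow_eq_zero_iff, hd0]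
  field_simp

lemma norm_sum_log_mul_cpow_sub_vonMangoldtPartialSum_mul_le {s : ℂ} (hs : s.re = 1) (hs1 : s ≠ 1)
    {N : ℕ} (hN : 1 ≤ N) :
    ‖∑ n ∈ Icc 1 N, (Real.log n : ℂ) * (n : ℂ) ^ (-s) - (vonMangoldtPartialSum s N * riemannZeta s
      + (∑ n ∈ Icc 1 N, Λ n / n : ℝ) * ((N : ℂ) ^ (1 - s) / (1 - s)))‖ ≤ 36 * ‖s‖ := by
  have hterm : ∀ d ∈ Icc 1 N, ‖(Λ d : ℂ) * (d : ℂ) ^ (-s) * zetaPartialSum s (N / d)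
      - ((Λ d : ℂ) * (d : ℂ) ^ (-s) * riemannZeta s
        + (Λ d / d : ℝ) * ((N : ℂ) ^ (1 - s) / (1 - s)))‖ ≤ 6 * ‖s‖ / N * Λ d := by
    intro d hd
    obtain ⟨hd1, hdN⟩ := mem_Icc.1 hd
    calc _ = ‖(Λ d : ℂ) * (d : ℂ) ^ (-s) * (zetaPartialSum s (N / d)
          - (riemannZeta s + ((N / d : ℝ) : ℂ) ^ (1 - s) / (1 - s)))‖ := by
          congr 1
          rw [show ∀ a b c e f : ℂ, a * b * (c - (e + f / (1 - s)))
            = a * b * c - (a * b * e + a * (b * f) / (1 - s)) by intros; ring,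
            natCast_cpow_neg_mul_div_cpow hd1]
          push_cast
          ring
      _ ≤ Λ d * (d : ℝ)⁻¹ * (6 * ‖s‖ * d / N) := by
          rw [norm_mul, norm_mul, Complex.norm_real,
            Real.norm_of_nonneg ArithmeticFunction.vonMangoldt_nonneg]
          gcongr
          · exact norm_natCast_cpow_neg_le_inv hd1 hs.ge
          · exact norm_zetaPartialSum_natDiv_sub_le hs hs1 hd1 hdN
      _ = _ := by field_simp
  calc _ ≤ ∑ d ∈ Icc 1 N, 6 * ‖s‖ / N * Λ d := by
        rw [sum_log_mul_cpow_eq, vonMangoldtPartialSum, sum_mul, Complex.ofReal_sum, sum_mul,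
          ← sum_add_distrib, ← sum_sub_distrib]
        exact norm_sum_le_of_le _ hterm
    _ ≤ 6 * ‖s‖ / N * (6 * N) := by rw [← mul_sum]; gcongr; exact sum_vonMangoldt_le N
    _ = _ := by field_simp; ring

/-- Both `∑ log n · n^{-s}` and its expansion through `log = Λ * 1` have a main term of size
`log N`; these cancel by Mertens' theorem, which is what makes the bound uniform in `N`. -/
lemma exists_norm_vonMangoldtPartialSum_mul_riemannZeta_le : ∃ C : ℝ, 0 ≤ C ∧ ∀ s : ℂ,
    s.re = 1 → s ≠ 1 → ∀ N : ℕ,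
    ‖vonMangoldtPartialSum s N‖ * ‖riemannZeta s‖ ≤ C * ‖s‖ + 2 / ‖1 - s‖ ^ 2 + 6 / ‖1 - s‖ := by
  obtain ⟨C, hC, hlog⟩ := exists_norm_sum_log_mul_cpow_sub_le
  refine ⟨36 + C, by positivity, fun s hs hs1 N ↦ ?_⟩
  rcases Nat.eq_zero_or_pos N with rfl | hN
  · have hempty : vonMangoldtPartialSum s 0 = 0 := by simp [vonMangoldtPartialSum]
    rw [hempty, norm_zero, zero_mul]
    positivity
  set W : ℂ := ∑ n ∈ Icc 1 N, (Real.log n : ℂ) * (n : ℂ) ^ (-s)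
  set ω : ℂ := (N : ℂ) ^ (1 - s) / (1 - s) with hω
  set M : ℝ := ∑ n ∈ Icc 1 N, Λ n / n
  have hmertens : ‖((M - Real.log N : ℝ) : ℂ) * ω‖ ≤ 6 / ‖1 - s‖ := by
    rw [norm_mul, Complex.norm_real, hω, norm_div, norm_natCast_cpow_one_sub hs hN, mul_one_div]
    gcongr
    exact abs_sum_vonMangoldt_div_sub_log_le N
  rw [← norm_mul]
  calc _ = ‖-(W - (vonMangoldtPartialSum s N * riemannZeta s + M * ω)) + (W - Real.log N * ω)
        - ((M - Real.log N : ℝ) : ℂ) * ω‖ := by congr 1; push_cast; ring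
    _ ≤ 36 * ‖s‖ + (C * ‖s‖ + 2 / ‖1 - s‖ ^ 2) + 6 / ‖1 - s‖ := by
        refine norm_sub_le_of_le (norm_add_le_of_le ?_ (hlog s hs hs1 N hN)) hmertens
        rw [norm_neg]
        exact norm_sum_log_mul_cpow_sub_vonMangoldtPartialSum_mul_le hs hs1 hN
    _ = _ := by ring

lemma exists_norm_vonMangoldtPartialSum_le {t₀ : ℝ} (ht₀ : 0 < t₀) : ∃ C : ℝ, 0 < C ∧
    ∀ τ : ℝ, t₀ ≤ |τ| → ∀ N : ℕ,
      ‖vonMangoldtPartialSum (1 + τ * I) N‖ ≤ C * (|τ| * √|τ|) := by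
  obtain ⟨C, hC, hprod⟩ := exists_norm_vonMangoldtPartialSum_mul_riemannZeta_le
  obtain ⟨c, hc, hzeta⟩ := exists_div_sqrt_le_norm_riemannZeta ht₀
  set K : ℝ := C * (1 / t₀ + 1) + 2 / t₀ ^ 3 + 6 / t₀ ^ 2
  refine ⟨K / c, by positivity, fun τ hτ N ↦ ?_⟩
  have hτ0 : 0 < |τ| := ht₀.trans_le hτ
  have hs1 : 1 + τ * I ≠ 1 := by simpa using abs_pos.1 hτ0
  have hnorm : ‖1 + τ * I‖ ≤ (1 / t₀ + 1) * |τ| :=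
    calc _ ≤ 1 + |τ| := (norm_add_le _ _).trans (by simp)
      _ ≤ |τ| / t₀ + |τ| := by gcongr; exact (one_le_div ht₀).2 hτ
      _ = _ := by ring
  have hK : ‖vonMangoldtPartialSum (1 + τ * I) N‖ * ‖riemannZeta (1 + τ * I)‖ ≤ K * |τ| :=
    calc _ ≤ C * ‖1 + τ * I‖ + 2 / |τ| ^ 2 + 6 / |τ| := by
          simpa using hprod (1 + τ * I) (by simp) hs1 N
      _ = C * ‖1 + τ * I‖ + 2 / |τ| ^ 3 * |τ| + 6 / |τ| ^ 2 * |τ| := by field_simp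
      _ ≤ C * ((1 / t₀ + 1) * |τ|) + 2 / t₀ ^ 3 * |τ| + 6 / t₀ ^ 2 * |τ| := by gcongr
      _ = K * |τ| := by ring
  have hsqrt : 0 < √|τ| := Real.sqrt_pos.2 hτ0
  have hdiv : ‖vonMangoldtPartialSum (1 + τ * I) N‖ * (c / √|τ|) ≤ K * |τ| := by
    refine le_trans ?_ hK
    gcongr
    exact hzeta τ hτ
  rw [← mul_div_assoc, div_le_iff₀ hsqrt] at hdiv
  rw [div_mul_eq_mul_div, le_div_iff₀ hc]
  linarith

/-! ### Fejér means of the square wave -/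

/-- The Fejér mean of order `N` of the Fourier series of the square wave `sgn (cos θ)`, whose
`k`-th cosine coefficient is `4 sin (kπ/2) / (πk)`. -/
noncomputable def fejerSquareWave (N : ℕ) (θ : ℝ) : ℝ :=
  4 / Real.pi *
    ∑ k ∈ Icc 1 N, (1 - k / N : ℝ) * (Real.sin (k * (Real.pi / 2)) / k * Real.cos (k * θ))

lemma sum_Icc_cos_eq (N : ℕ) (x : ℝ) :
    ∑ k ∈ Icc 1 N, Real.cos (k * x)
      = Real.cos (N * x) * ∑ j ∈ range N, Real.cos (j * x)
        + Real.sin (N * x) * ∑ j ∈ range N, Real.sin (j * x) := by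
  have hterm : ∀ j ∈ range N, Real.cos (N * x) * Real.cos (j * x)
      + Real.sin (N * x) * Real.sin (j * x) = Real.cos (((N - 1 - j + 1 : ℕ) : ℝ) * x) := by
    intro j hj
    have hjN := mem_range.1 hj
    rw [← Real.cos_sub, show N - 1 - j + 1 = N - j by omega, Nat.cast_sub hjN.le, sub_mul]
  rw [mul_sum, mul_sum, ← sum_add_distrib, sum_congr rfl hterm,
    sum_range_reflect (fun j ↦ Real.cos (((j + 1 : ℕ) : ℝ) * x)) N, range_eq_Ico,
    sum_Ico_add' (fun j : ℕ ↦ Real.cos ((j : ℝ) * x)) 0 N 1]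
  rfl

lemma add_two_mul_sum_sub_mul_cos_eq (N : ℕ) (x : ℝ) :
    N + 2 * ∑ k ∈ Icc 1 N, ((N : ℝ) - k) * Real.cos (k * x)
      = (∑ j ∈ range N, Real.cos (j * x)) ^ 2 + (∑ j ∈ range N, Real.sin (j * x)) ^ 2 := by
  induction N with
  | zero => simp
  | succ N ih =>
    have hsplit : ∑ k ∈ Icc 1 (N + 1), (((N + 1 : ℕ) : ℝ) - k) * Real.cos (k * x)
        = ∑ k ∈ Icc 1 N, ((N : ℝ) - k) * Real.cos (k * x) + ∑ k ∈ Icc 1 N, Real.cos (k * x) := by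
      rw [sum_Icc_succ_top (by omega), sub_self, zero_mul, add_zero, ← sum_add_distrib]
      exact sum_congr rfl fun k _ ↦ by push_cast; ring
    rw [hsplit, sum_Icc_cos_eq, sum_range_succ, sum_range_succ, Nat.cast_succ]
    linear_combination ih - Real.sin_sq_add_cos_sq (N * x)

/-- The primitive, vanishing at `0`, of the Fejér kernel `1 + 2 ∑_{k ≤ N} (1 - k/N) cos kx`. -/
noncomputable def fejerKernelPrimitive (N : ℕ) (x : ℝ) : ℝ :=
  x + 2 * ∑ k ∈ Icc 1 N, (1 - k / N : ℝ) * (Real.sin (k * x) / k)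

lemma hasDerivAt_fejerKernelPrimitive (N : ℕ) (x : ℝ) : HasDerivAt (fejerKernelPrimitive N)
    (1 + 2 * ∑ k ∈ Icc 1 N, (1 - k / N : ℝ) * Real.cos (k * x)) x := by
  refine (hasDerivAt_id x).add (.const_mul 2 (.fun_sum fun k hk ↦ .const_mul _ ?_))
  have hk0 : (k : ℝ) ≠ 0 := Nat.cast_ne_zero.2 (by have := mem_Icc.1 hk; omega)
  refine ((((hasDerivAt_id x).const_mul (k : ℝ)).sin).div_const (k : ℝ)).congr_deriv ?_
  simp [hk0]

lemma one_add_two_mul_sum_cos_nonneg {N : ℕ} (hN : 1 ≤ N) (x : ℝ) :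
    0 ≤ 1 + 2 * ∑ k ∈ Icc 1 N, (1 - k / N : ℝ) * Real.cos (k * x) := by
  have hN0 : (0 : ℝ) < N := mod_cast hN
  have hsum : (N : ℝ) * (1 + 2 * ∑ k ∈ Icc 1 N, (1 - k / N : ℝ) * Real.cos (k * x))
      = (∑ j ∈ range N, Real.cos (j * x)) ^ 2 + (∑ j ∈ range N, Real.sin (j * x)) ^ 2 := by
    rw [← add_two_mul_sum_sub_mul_cos_eq, mul_add, mul_one, mul_left_comm, mul_sum]
    congr 2
    exact sum_congr rfl fun k _ ↦ by field_simp
  exact nonneg_of_mul_nonneg_right (hsum ▸ by positivity) hN0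

lemma monotone_fejerKernelPrimitive {N : ℕ} (hN : 1 ≤ N) : Monotone (fejerKernelPrimitive N) :=
  monotone_of_hasDerivAt_nonneg (hasDerivAt_fejerKernelPrimitive N)
    (one_add_two_mul_sum_cos_nonneg hN)

lemma fejerKernelPrimitive_add_two_pi (N : ℕ) (x : ℝ) :
    fejerKernelPrimitive N (x + 2 * Real.pi) = fejerKernelPrimitive N x + 2 * Real.pi := by
  have hsin : ∀ k : ℕ, Real.sin (k * (x + 2 * Real.pi)) = Real.sin (k * x) := fun k ↦ by
    rw [mul_add, Real.sin_add_nat_mul_two_pi]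
  simp only [fejerKernelPrimitive, hsin]
  ring

/-- The square wave is `2χ - 1` with `χ` the indicator function of `|θ| ≤ π / 2` modulo `2π`. -/
lemma fejerSquareWave_eq (N : ℕ) (θ : ℝ) : fejerSquareWave N θ =
    (fejerKernelPrimitive N (θ + Real.pi / 2) - fejerKernelPrimitive N (θ - Real.pi / 2)) / Real.pi
      - 1 := by
  have hsum : ∑ k ∈ Icc 1 N, (1 - k / N : ℝ) * (Real.sin (k * (θ + Real.pi / 2)) / k)
      - ∑ k ∈ Icc 1 N, (1 - k / N : ℝ) * (Real.sin (k * (θ - Real.pi / 2)) / k)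
      = 2 * ∑ k ∈ Icc 1 N,
        (1 - k / N : ℝ) * (Real.sin (k * (Real.pi / 2)) / k * Real.cos (k * θ)) := by
    rw [← sum_sub_distrib, mul_sum]
    refine sum_congr rfl fun k _ ↦ ?_
    rw [mul_add, mul_sub, Real.sin_add, Real.sin_sub]
    ring
  simp only [fejerKernelPrimitive, fejerSquareWave]
  rw [eq_sub_iff_add_eq, eq_div_iff Real.pi_ne_zero, add_mul, mul_right_comm,
    div_mul_cancel₀ _ Real.pi_ne_zero]
  linarith

lemma fejerSquareWave_mem_Icc {N : ℕ} (hN : 1 ≤ N) (θ : ℝ) :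
    fejerSquareWave N θ ∈ Set.Icc (-1 : ℝ) 1 := by
  have hπ := Real.pi_pos
  have hmono := monotone_fejerKernelPrimitive hN
  have hleft := hmono (show θ - Real.pi / 2 ≤ θ + Real.pi / 2 by linarith)
  have hright := hmono (show θ + Real.pi / 2 ≤ θ - Real.pi / 2 + 2 * Real.pi by linarith)
  rw [fejerKernelPrimitive_add_two_pi] at hright
  rw [fejerSquareWave_eq, Set.mem_Icc, neg_le_sub_iff_le_add, sub_le_iff_le_add,
    le_add_iff_nonneg_left, div_le_iff₀ hπ]
  exact ⟨div_nonneg (by linarith) hπ.le, by linarith⟩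

/-! ### Weighted sums -/

section WeightedSums

variable {E : Type*} [SeminormedAddCommGroup E] [NormedSpace ℝ E]

lemma norm_sum_smul_sub_smul_sum_le {w : ℕ → ℝ} (hw : Monotone w) {c : ℕ → E} {B : ℝ}
    (hB : ∀ N, ‖∑ n ∈ Icc 1 N, c n‖ ≤ B) (N : ℕ) :
    ‖∑ n ∈ Icc 1 N, w n • c n - w N • ∑ n ∈ Icc 1 N, c n‖ ≤ (w N - w 0) * B := by
  induction N with
  | zero => simp
  | succ N ih =>
    have hstep : 0 ≤ w (N + 1) - w N := sub_nonneg.2 (hw N.le_succ)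
    have hsum : ∑ n ∈ Icc 1 (N + 1), w n • c n - w (N + 1) • ∑ n ∈ Icc 1 (N + 1), c n
        = (∑ n ∈ Icc 1 N, w n • c n - w N • ∑ n ∈ Icc 1 N, c n)
          - (w (N + 1) - w N) • ∑ n ∈ Icc 1 N, c n := by
      rw [sum_Icc_succ_top (by omega), sum_Icc_succ_top (by omega)]
      module
    calc _ ≤ (w N - w 0) * B + (w (N + 1) - w N) * B := by
          rw [hsum]
          refine norm_sub_le_of_le ih ?_
          rw [norm_smul, Real.norm_of_nonneg hstep]
          exact mul_le_mul_of_nonneg_left (hB N) hstep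
      _ = (w (N + 1) - w 0) * B := by ring

lemma norm_sum_smul_le_of_monotone {w : ℕ → ℝ} (hw : Monotone w) (hw0 : 0 ≤ w 0) {c : ℕ → E}
    {B : ℝ} (hB : ∀ N, ‖∑ n ∈ Icc 1 N, c n‖ ≤ B) (N : ℕ) :
    ‖∑ n ∈ Icc 1 N, w n • c n‖ ≤ 2 * w N * B := by
  have hwN : 0 ≤ w N := hw0.trans (hw N.zero_le)
  have hB0 : 0 ≤ B := (norm_nonneg _).trans (hB 0)
  calc ‖∑ n ∈ Icc 1 N, w n • c n‖
      ≤ ‖w N • ∑ n ∈ Icc 1 N, c n‖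
        + ‖∑ n ∈ Icc 1 N, w n • c n - w N • ∑ n ∈ Icc 1 N, c n‖ := norm_le_insert' _ _
    _ ≤ w N * B + (w N - w 0) * B := by
        refine add_le_add ?_ (norm_sum_smul_sub_smul_sum_le hw hB N)
        rw [norm_smul, Real.norm_of_nonneg hwN]
        exact mul_le_mul_of_nonneg_left (hB N) hwN
    _ ≤ 2 * w N * B := by linarith [mul_nonneg hw0 hB0]

end WeightedSums

lemma mul_sub_mul_rpow_neg_le {a b q : ℝ} (ha : 0 < a) (hab : a ≤ b) (hq : 0 ≤ q) (hq1 : q ≤ 1) :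
    (1 - q) * ((b - a) * b ^ (-q)) ≤ b ^ (1 - q) - a ^ (1 - q) := by
  have hb : 0 < b := ha.trans_le hab
  have hbern : (a / b) ^ (1 - q) ≤ 1 + (1 - q) * (a / b - 1) := by
    simpa using rpow_one_add_le_one_add_mul_self (s := a / b - 1) (p := 1 - q)
      (by linarith [div_pos ha hb]) (by linarith) (by linarith)
  have hpow : b ^ (1 - q) = b * b ^ (-q) := by
    rw [sub_eq_add_neg, Real.rpow_add hb, Real.rpow_one]
  rw [Real.div_rpow ha.le hb.le, div_le_iff₀ (by positivity)] at hbern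
  have hexpand : (1 + (1 - q) * (a / b - 1)) * b ^ (1 - q)
      = b ^ (1 - q) - (1 - q) * ((b - a) * b ^ (-q)) := by
    rw [hpow]
    field_simp
    ring
  linarith

lemma sum_mul_rpow_neg_le {a : ℕ → ℝ} (ha : ∀ n, 0 ≤ a n) {q : ℝ} (hq : 0 ≤ q) (hq1 : q < 1)
    (N : ℕ) :
    ∑ n ∈ Icc 1 N, a n * (1 + ∑ k ∈ Icc 1 n, a k) ^ (-q)
      ≤ (1 + ∑ k ∈ Icc 1 N, a k) ^ (1 - q) / (1 - q) := by
  have hq' : 0 < 1 - q := by linarith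
  induction N with
  | zero => simpa using hq1.le
  | succ N ih =>
    have hS : 0 < 1 + ∑ k ∈ Icc 1 N, a k := by linarith [sum_nonneg fun k (_ : k ∈ Icc 1 N) ↦ ha k]
    have hstep := mul_sub_mul_rpow_neg_le hS (le_add_of_nonneg_right (ha (N + 1))) hq hq1.le
    rw [add_sub_cancel_left] at hstep
    rw [sum_Icc_succ_top (by omega), sum_Icc_succ_top (by omega), ← add_assoc]
    rw [le_div_iff₀ hq'] at ih ⊢
    linarith

/-! ### Completely multiplicative functions -/

/-- The completely multiplicative function with prescribed values `h p` at the primes `p`; at `0`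
it takes the junk value `1`. -/
def primeProd {M : Type*} [CommMonoid M] (h : ℕ → M) (n : ℕ) : M :=
  (n.primeFactorsList.map h).prod

section primeProd

variable {M : Type*} [CommMonoid M] (h : ℕ → M)

lemma primeProd_one : primeProd h 1 = 1 := by simp [primeProd]

lemma primeProd_prime {p : ℕ} (hp : p.Prime) : primeProd h p = h p := by
  simp [primeProd, Nat.primeFactorsList_prime hp]

lemma primeProd_mul {m n : ℕ} (hm : m ≠ 0) (hn : n ≠ 0) :
    primeProd h (m * n) = primeProd h m * primeProd h n := by
  rw [primeProd, ((Nat.perm_primeFactorsList_mul hm hn).map h).prod_eq, List.map_append,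
    List.prod_append, primeProd, primeProd]

end primeProd

lemma abs_primeProd_le_one {h : ℕ → ℝ} (hh : ∀ n, |h n| ≤ 1) (n : ℕ) : |primeProd h n| ≤ 1 := by
  rw [primeProd]
  induction n.primeFactorsList with
  | nil => simp
  | cons p l ih =>
    rw [List.map_cons, List.prod_cons, abs_mul]
    exact mul_le_one₀ (hh p) (abs_nonneg _) ih

lemma isMult_primeProd (h : ℕ → ℝ) : IsMult (primeProd h) := by
  refine ⟨primeProd_one h, fun m n hmn ↦ ?_⟩
  rcases eq_or_ne m 0 with rfl | hm
  · simp [(Nat.coprime_zero_left n).1 hmn, primeProd_one]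
  rcases eq_or_ne n 0 with rfl | hn
  · simp [(Nat.coprime_zero_right m).1 hmn, primeProd_one]
  exact primeProd_mul h hm hn

lemma exists_sum_not_prime_vonMangoldt_div_le : ∃ C : ℝ, 0 < C ∧ ∀ N : ℕ,
    ∑ n ∈ Icc 1 N, (if n.Prime then 0 else Λ n / n) ≤ C := by
  have hsummable : Summable fun n : ℕ ↦ if n.Prime then 0 else Λ n / n := by
    refine (ArithmeticFunction.vonMangoldt.summable_residueClass_non_primes_div
      (q := 1) 0).congr fun n ↦ ?_
    have hclass : ArithmeticFunction.vonMangoldt.residueClass (0 : ZMod 1) n = Λ n :=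
      Set.indicator_of_mem (s := {n : ℕ | (n : ZMod 1) = 0}) (Subsingleton.elim _ _) _
    rw [hclass, ite_div, zero_div]
  have hnonneg : ∀ n : ℕ, 0 ≤ if n.Prime then 0 else Λ n / n := fun n ↦ by
    split_ifs
    · exact le_rfl
    · exact div_nonneg ArithmeticFunction.vonMangoldt_nonneg n.cast_nonneg
  refine ⟨∑' n : ℕ, (if n.Prime then 0 else Λ n / n) + 1,
    add_pos_of_nonneg_of_pos (tsum_nonneg hnonneg) one_pos, fun N ↦ ?_⟩
  linarith [hsummable.sum_le_tsum (Icc 1 N) fun n _ ↦ hnonneg n]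

lemma exists_norm_sum_primeProd_sub_le : ∃ C : ℝ, 0 < C ∧ ∀ h : ℕ → ℝ, (∀ n, |h n| ≤ 1) →
    ∀ s : ℂ, 1 ≤ s.re → ∀ N : ℕ,
      ‖∑ n ∈ Icc 1 N, (Λ n : ℂ) * ((primeProd h n : ℝ) : ℂ) * (n : ℂ) ^ (-s)
        - ∑ n ∈ Icc 1 N, (Λ n : ℂ) * (h n : ℂ) * (n : ℂ) ^ (-s)‖ ≤ C := by
  obtain ⟨C, hC, hpow⟩ := exists_sum_not_prime_vonMangoldt_div_le
  refine ⟨2 * C, by positivity, fun h hh s hs N ↦ ?_⟩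
  rw [← sum_sub_distrib]
  calc _ ≤ ∑ n ∈ Icc 1 N, 2 * (if n.Prime then 0 else Λ n / n) := by
        refine norm_sum_le_of_le _ fun n hn ↦ ?_
        have hn1 := (mem_Icc.1 hn).1
        rw [← sub_mul, ← mul_sub]
        split_ifs with hp
        · simp [primeProd_prime h hp]
        have hdiff : |primeProd h n - h n| ≤ 2 := by
          linarith [abs_sub (primeProd h n) (h n), abs_primeProd_le_one hh n, hh n]
        rw [norm_mul, norm_mul, ← Complex.ofReal_sub, Complex.norm_real, Complex.norm_real,
          Real.norm_of_nonneg ArithmeticFunction.vonMangoldt_nonneg, Real.norm_eq_abs]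
        calc _ ≤ Λ n * 2 * (n : ℝ)⁻¹ := by
              gcongr
              exact norm_natCast_cpow_neg_le_inv hn1 hs
          _ = _ := by ring
    _ ≤ 2 * C := by
        rw [← mul_sum]
        gcongr
        exact hpow N

/-! ### Resonance of the smoothed sign with `n ^ (-it)` -/

/-- Degree of the Fejér mean attached to the integer `n`. A degree `(log n)^δ` leads to error terms
of size `(log N)^(1-δ)` and `(log N)^(3δ/2)`, which balance at `δ = 2/5`; it matters that the
resulting exponent `3/5` is less than `2/π`. -/
noncomputable def fejerDegree (n : ℕ) : ℕ := ⌈(1 + Real.log n) ^ (2 / 5 : ℝ)⌉₊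

lemma one_le_one_add_log (n : ℕ) : 1 ≤ 1 + Real.log n := by
  linarith [Real.log_natCast_nonneg n]

lemma one_le_fejerDegree (n : ℕ) : 1 ≤ fejerDegree n := by
  have := one_le_one_add_log n
  exact Nat.one_le_ceil_iff.2 (by positivity)

lemma monotone_fejerDegree : Monotone fejerDegree := fun m n hmn ↦ by
  have hlog : Real.log m ≤ Real.log n := by
    rcases m.eq_zero_or_pos with rfl | hm
    · simpa using Real.log_natCast_nonneg n
    · exact Real.log_le_log (mod_cast hm) (mod_cast hmn)
  refine Nat.ceil_mono (Real.rpow_le_rpow ?_ (by linarith) (by norm_num))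
  linarith [one_le_one_add_log m]

lemma rpow_le_fejerDegree (n : ℕ) : (1 + Real.log n) ^ (2 / 5 : ℝ) ≤ fejerDegree n :=
  Nat.le_ceil _

lemma fejerDegree_le (n : ℕ) : (fejerDegree n : ℝ) ≤ 2 * (1 + Real.log n) ^ (2 / 5 : ℝ) := by
  have hone : 1 ≤ (1 + Real.log n) ^ (2 / 5 : ℝ) :=
    Real.one_le_rpow (one_le_one_add_log n) (by norm_num)
  have := Nat.ceil_lt_add_one (zero_le_one.trans hone)
  rw [fejerDegree]
  linarith

lemma fejerDegree_mul_sqrt_le (n : ℕ) :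
    (fejerDegree n : ℝ) * √(fejerDegree n) ≤ 4 * (1 + Real.log n) ^ (3 / 5 : ℝ) := by
  have hl := one_le_one_add_log n
  have hdeg := fejerDegree_le n
  set l := 1 + Real.log n
  have hsqrt : √(fejerDegree n : ℝ) ≤ 2 * l ^ (1 / 5 : ℝ) := by
    rw [Real.sqrt_le_left (by positivity), mul_pow, ← Real.rpow_mul_natCast (by linarith)]
    norm_num
    linarith [show (0 : ℝ) ≤ l ^ (2 / 5 : ℝ) by positivity]
  calc (fejerDegree n : ℝ) * √(fejerDegree n)
      ≤ (2 * l ^ (2 / 5 : ℝ)) * (2 * l ^ (1 / 5 : ℝ)) := by gcongr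
    _ = 4 * (l ^ (2 / 5 : ℝ) * l ^ (1 / 5 : ℝ)) := by ring
    _ = 4 * l ^ (3 / 5 : ℝ) := by rw [← Real.rpow_add (by linarith)]; norm_num

lemma seven_mul_rpow_le {x p : ℝ} (hx : 0 ≤ x) (hp : p ≤ 1) : (7 * x) ^ p ≤ 7 * x ^ p := by
  rw [Real.mul_rpow (by norm_num) hx]
  gcongr
  exact Real.rpow_le_self_of_one_le (by norm_num) hp

lemma exists_sum_vonMangoldt_div_fejerDegree_le : ∃ C : ℝ, 0 < C ∧ ∀ N : ℕ,
    ∑ n ∈ Icc 1 N, Λ n / n / fejerDegree n ≤ C * (1 + Real.log N) ^ (3 / 5 : ℝ) := by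
  have hterm : ∀ n : ℕ, 0 ≤ Λ n / n := fun n ↦
    div_nonneg ArithmeticFunction.vonMangoldt_nonneg n.cast_nonneg
  set S : ℕ → ℝ := fun N ↦ 1 + ∑ n ∈ Icc 1 N, Λ n / n
  have hS1 : ∀ N, 1 ≤ S N := fun N ↦ le_add_of_nonneg_right (sum_nonneg fun n _ ↦ hterm n)
  have hSlog : ∀ N, S N ≤ 7 * (1 + Real.log N) := fun N ↦ by
    linarith [(abs_le.1 (abs_sum_vonMangoldt_div_sub_log_le N)).2, Real.log_natCast_nonneg N]
  have hSpow : ∀ N {p : ℝ}, 0 ≤ p → p ≤ 1 → S N ^ p ≤ 7 * (1 + Real.log N) ^ p :=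
    fun N p hp hp1 ↦ (Real.rpow_le_rpow (by linarith [hS1 N]) (hSlog N) hp).trans
      (seven_mul_rpow_le (by linarith [one_le_one_add_log N]) hp1)
  have hdeg : ∀ n, (fejerDegree n : ℝ)⁻¹ ≤ 7 * S n ^ (-(2 / 5) : ℝ) := fun n ↦ by
    have hSn : 0 < S n := by linarith [hS1 n]
    have hd : (0 : ℝ) < fejerDegree n := mod_cast one_le_fejerDegree n
    rw [Real.rpow_neg hSn.le, ← div_eq_mul_inv, le_div_iff₀ (by positivity),
      inv_mul_le_iff₀ hd, mul_comm]
    exact (hSpow n (by norm_num) (by norm_num)).trans (by gcongr; exact rpow_le_fejerDegree n)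
  refine ⟨7 * (7 / (3 / 5)), by norm_num, fun N ↦ ?_⟩
  calc ∑ n ∈ Icc 1 N, Λ n / n / fejerDegree n
      ≤ ∑ n ∈ Icc 1 N, 7 * (Λ n / n * S n ^ (-(2 / 5) : ℝ)) := by
        refine sum_le_sum fun n _ ↦ ?_
        rw [div_eq_mul_inv (_ / _), mul_left_comm]
        exact mul_le_mul_of_nonneg_left (hdeg n) (hterm n)
    _ ≤ 7 * (S N ^ (1 - 2 / 5 : ℝ) / (1 - 2 / 5)) := by
        rw [← mul_sum]
        gcongr
        exact sum_mul_rpow_neg_le hterm (by norm_num) (by norm_num) N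
    _ ≤ 7 * (7 * (1 + Real.log N) ^ (3 / 5 : ℝ) / (3 / 5)) := by
        norm_num only
        gcongr
        exact hSpow N (by norm_num) (by norm_num)
    _ = _ := by ring

/-- The Fejér mean, of slowly growing degree, of the sign of `cos (t log n)`. -/
noncomputable def smoothedSign (t : ℝ) (n : ℕ) : ℝ :=
  fejerSquareWave (fejerDegree n) (t * Real.log n)

lemma abs_smoothedSign_le_one (t : ℝ) (n : ℕ) : |smoothedSign t n| ≤ 1 :=
  abs_le.2 (fejerSquareWave_mem_Icc (one_le_fejerDegree n) _)

/-- Fejér weight of the frequency `k` at the integer `n`, truncated to `0` beyond the degree. -/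
noncomputable def fejerWeight (k n : ℕ) : ℝ := max 0 (1 - k / fejerDegree n)

lemma monotone_fejerWeight (k : ℕ) : Monotone (fejerWeight k) := fun m n hmn ↦ by
  have hm : (0 : ℝ) < fejerDegree m := mod_cast one_le_fejerDegree m
  have hdeg : (fejerDegree m : ℝ) ≤ fejerDegree n := mod_cast monotone_fejerDegree hmn
  unfold fejerWeight
  gcongr

lemma fejerWeight_nonneg (k n : ℕ) : 0 ≤ fejerWeight k n := le_max_left _ _

lemma fejerWeight_le_one (k n : ℕ) : fejerWeight k n ≤ 1 :=
  max_le zero_le_one (sub_le_self 1 (by positivity))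

lemma fejerWeight_of_le {k n : ℕ} (h : k ≤ fejerDegree n) :
    fejerWeight k n = 1 - k / fejerDegree n :=
  max_eq_right (sub_nonneg.2 (div_le_one_of_le₀ (mod_cast h) (by positivity)))

lemma fejerWeight_of_lt {k n : ℕ} (h : fejerDegree n < k) : fejerWeight k n = 0 := by
  have hd : (0 : ℝ) < fejerDegree n := mod_cast one_le_fejerDegree n
  exact max_eq_left (sub_nonpos.2 ((one_le_div hd).2 (mod_cast h.le)))

/-- Half the `k`-th Fourier coefficient of the square wave `sgn (cos θ)`. -/
noncomputable def squareWaveCoeff (k : ℕ) : ℝ :=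
  2 / Real.pi * (Real.sin (k * (Real.pi / 2)) / k)

lemma abs_squareWaveCoeff_le (k : ℕ) : |squareWaveCoeff k| ≤ (k : ℝ)⁻¹ := by
  have hpi : 2 / Real.pi ≤ 1 := div_le_one_of_le₀ Real.two_le_pi Real.pi_pos.le
  rw [squareWaveCoeff, abs_mul, abs_of_pos (by positivity), abs_div, Nat.abs_cast]
  calc _ ≤ 1 * (1 / (k : ℝ)) := by
        gcongr
        exact Real.abs_sin_le_one _
    _ = (k : ℝ)⁻¹ := by rw [one_mul, one_div]

lemma smoothedSign_eq_sum {t : ℝ} {n K : ℕ} (h : fejerDegree n ≤ K) :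
    smoothedSign t n = ∑ k ∈ Icc 1 K,
      squareWaveCoeff k * (fejerWeight k n * (2 * Real.cos (k * (t * Real.log n)))) := by
  rw [smoothedSign, fejerSquareWave, mul_sum, ← sum_subset (Icc_subset_Icc_right h)]
  · refine sum_congr rfl fun k hk ↦ ?_
    rw [fejerWeight_of_le (mem_Icc.1 hk).2, squareWaveCoeff]
    ring
  · intro k hk hk'
    have hlt : fejerDegree n < k := by
      by_contra! hle
      exact hk' (mem_Icc.2 ⟨(mem_Icc.1 hk).1, hle⟩)
    rw [fejerWeight_of_lt hlt, zero_mul, mul_zero]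

lemma two_mul_cos_mul_cpow (t : ℝ) (k : ℕ) {n : ℕ} (hn : n ≠ 0) :
    (2 * Real.cos (k * (t * Real.log n)) : ℂ) * (n : ℂ) ^ (-(1 + t * I))
      = (n : ℂ) ^ (-(1 + ((1 - k) * t : ℝ) * I)) + (n : ℂ) ^ (-(1 + ((1 + k) * t : ℝ) * I)) := by
  have hn0 : (n : ℂ) ≠ 0 := mod_cast hn
  rw [Complex.ofReal_cos, Complex.two_cos, add_mul, Complex.cpow_def_of_ne_zero hn0,
    Complex.cpow_def_of_ne_zero hn0, Complex.cpow_def_of_ne_zero hn0, ← Complex.exp_add,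
    ← Complex.exp_add]
  push_cast
  congr 2 <;> ring

/-- The sum `∑_{n ≤ N} Λ(n) n^{-1-iτ}` weighted by the Fejér weights of the frequency `k`. -/
noncomputable def fejerVonMangoldtSum (k : ℕ) (τ : ℝ) (N : ℕ) : ℂ :=
  ∑ n ∈ Icc 1 N, fejerWeight k n • ((Λ n : ℂ) * (n : ℂ) ^ (-(1 + τ * I)))

lemma sum_smoothedSign_eq (t : ℝ) (N : ℕ) :
    ∑ n ∈ Icc 1 N, (Λ n : ℂ) * (smoothedSign t n : ℂ) * (n : ℂ) ^ (-(1 + t * I))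
      = ∑ k ∈ Icc 1 (fejerDegree N), squareWaveCoeff k •
        (fejerVonMangoldtSum k ((1 - k) * t) N + fejerVonMangoldtSum k ((1 + k) * t) N) := by
  simp only [fejerVonMangoldtSum, ← sum_add_distrib, smul_sum]
  rw [sum_comm]
  refine sum_congr rfl fun n hn ↦ ?_
  obtain ⟨hn1, hnN⟩ := mem_Icc.1 hn
  rw [smoothedSign_eq_sum (monotone_fejerDegree hnN), Complex.ofReal_sum, mul_sum, sum_mul]
  refine sum_congr rfl fun k _ ↦ ?_
  rw [← smul_add, ← mul_add, ← two_mul_cos_mul_cpow t k (Nat.one_le_iff_ne_zero.1 hn1)]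
  simp only [Complex.real_smul]
  push_cast
  ring

lemma exists_norm_fejerVonMangoldtSum_le {t : ℝ} (ht : t ≠ 0) : ∃ D : ℝ, 0 < D ∧
    ∀ (k : ℕ) (τ : ℝ), |t| ≤ |τ| → |τ| ≤ 2 * k * |t| → ∀ N,
      ‖fejerVonMangoldtSum k τ N‖ ≤ D * (k * √k) := by
  have ht0 : 0 < |t| := abs_pos.2 ht
  obtain ⟨C, hC, hbound⟩ := exists_norm_vonMangoldtPartialSum_le ht0
  refine ⟨2 * C * (2 * |t| * √(2 * |t|)), by positivity, fun k τ hτ hτk N ↦ ?_⟩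
  calc ‖fejerVonMangoldtSum k τ N‖ ≤ 2 * fejerWeight k N * (C * (|τ| * √|τ|)) :=
        norm_sum_smul_le_of_monotone (monotone_fejerWeight k) (fejerWeight_nonneg k 0)
          (hbound τ hτ) N
    _ ≤ 2 * 1 * (C * ((2 * k * |t|) * √(2 * k * |t|))) := by
        gcongr
        exact fejerWeight_le_one k N
    _ = _ := by
        rw [show 2 * (k : ℝ) * |t| = (2 * |t|) * k by ring, Real.sqrt_mul (by positivity)]
        ring

lemma norm_sum_squareWaveCoeff_smul_le {D : ℝ} (hD : 0 ≤ D) {K : ℕ} {s : Finset ℕ}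
    (hs : s ⊆ Icc 1 K) {F : ℕ → ℂ} (hF : ∀ k ∈ s, ‖F k‖ ≤ D * (k * √k)) :
    ‖∑ k ∈ s, squareWaveCoeff k • F k‖ ≤ D * (K * √K) :=
  calc ‖∑ k ∈ s, squareWaveCoeff k • F k‖ ≤ ∑ _k ∈ s, D * √K := by
        refine norm_sum_le_of_le _ fun k hk ↦ ?_
        obtain ⟨hk1, hkK⟩ := mem_Icc.1 (hs hk)
        have : (0 : ℝ) < k := mod_cast hk1
        rw [norm_smul, Real.norm_eq_abs]
        calc _ ≤ (k : ℝ)⁻¹ * (D * (k * √k)) := by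
              gcongr
              · exact abs_squareWaveCoeff_le k
              · exact hF k hk
          _ = D * √k := by field_simp
          _ ≤ D * √K := by gcongr
    _ ≤ ∑ _k ∈ Icc 1 K, D * √K := sum_le_sum_of_subset_of_nonneg hs fun _ _ _ ↦ by positivity
    _ = D * (K * √K) := by
        rw [sum_const, Nat.card_Icc, add_tsub_cancel_right, nsmul_eq_mul]
        ring

lemma exists_norm_sum_smoothedSign_sub_le {t : ℝ} (ht : t ≠ 0) : ∃ C : ℝ, 0 < C ∧ ∀ N : ℕ,
    ‖∑ n ∈ Icc 1 N, (Λ n : ℂ) * (smoothedSign t n : ℂ) * (n : ℂ) ^ (-(1 + t * I))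
      - squareWaveCoeff 1 • fejerVonMangoldtSum 1 0 N‖ ≤ C * (1 + Real.log N) ^ (3 / 5 : ℝ) := by
  obtain ⟨D, hD, hbound⟩ := exists_norm_fejerVonMangoldtSum_le ht
  refine ⟨8 * D, by positivity, fun N ↦ ?_⟩
  have hlow : ∀ k ∈ Ioc 1 (fejerDegree N),
      ‖fejerVonMangoldtSum k ((1 - k) * t) N‖ ≤ D * (k * √k) := fun k hk ↦ by
    have hk2 : (2 : ℝ) ≤ k := mod_cast (mem_Ioc.1 hk).1
    refine hbound k _ ?_ ?_ N <;>
      rw [abs_mul, abs_of_nonpos (by linarith : (1 : ℝ) - k ≤ 0)]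
    · exact le_mul_of_one_le_left (abs_nonneg t) (by linarith)
    · gcongr
      linarith
  have hhigh : ∀ k ∈ Icc 1 (fejerDegree N),
      ‖fejerVonMangoldtSum k ((1 + k) * t) N‖ ≤ D * (k * √k) := fun k hk ↦ by
    have hk1 : (1 : ℝ) ≤ k := mod_cast (mem_Icc.1 hk).1
    refine hbound k _ ?_ ?_ N <;> rw [abs_mul, abs_of_nonneg (by linarith : (0 : ℝ) ≤ 1 + k)]
    · exact le_mul_of_one_le_left (abs_nonneg t) (by linarith)
    · gcongr
      linarith
  have hsplit : ∑ n ∈ Icc 1 N, (Λ n : ℂ) * (smoothedSign t n : ℂ) * (n : ℂ) ^ (-(1 + t * I))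
      - squareWaveCoeff 1 • fejerVonMangoldtSum 1 0 N
      = ∑ k ∈ Ioc 1 (fejerDegree N), squareWaveCoeff k • fejerVonMangoldtSum k ((1 - k) * t) N
        + ∑ k ∈ Icc 1 (fejerDegree N),
          squareWaveCoeff k • fejerVonMangoldtSum k ((1 + k) * t) N := by
    simp only [sum_smoothedSign_eq, smul_add, sum_add_distrib]
    rw [← add_sum_Ioc_eq_sum_Icc (one_le_fejerDegree N), Nat.cast_one, sub_self, zero_mul]
    ring
  calc _ ≤ D * (fejerDegree N * √(fejerDegree N)) + D * (fejerDegree N * √(fejerDegree N)) := by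
        rw [hsplit]
        exact norm_add_le_of_le
          (norm_sum_squareWaveCoeff_smul_le hD.le Ioc_subset_Icc_self hlow)
          (norm_sum_squareWaveCoeff_smul_le hD.le subset_rfl hhigh)
    _ = 2 * D * (fejerDegree N * √(fejerDegree N)) := by ring
    _ ≤ 2 * D * (4 * (1 + Real.log N) ^ (3 / 5 : ℝ)) :=
        mul_le_mul_of_nonneg_left (fejerDegree_mul_sqrt_le N) (by positivity)
    _ = _ := by ring

lemma fejerVonMangoldtSum_one_zero (N : ℕ) : fejerVonMangoldtSum 1 0 N
    = (∑ n ∈ Icc 1 N, Λ n / n - ∑ n ∈ Icc 1 N, Λ n / n / fejerDegree n : ℝ) := by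
  rw [fejerVonMangoldtSum, ← sum_sub_distrib, Complex.ofReal_sum]
  refine sum_congr rfl fun n _ ↦ ?_
  rw [fejerWeight_of_le (one_le_fejerDegree n)]
  simp [Complex.cpow_neg_one]
  ring

lemma exists_norm_fejerVonMangoldtSum_one_zero_sub_log_le : ∃ C : ℝ, 0 < C ∧ ∀ N : ℕ,
    ‖fejerVonMangoldtSum 1 0 N - Real.log N‖ ≤ C * (1 + Real.log N) ^ (3 / 5 : ℝ) := by
  obtain ⟨C, hC, hdeg⟩ := exists_sum_vonMangoldt_div_fejerDegree_le
  refine ⟨6 + C, by positivity, fun N ↦ ?_⟩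
  have hnonneg : 0 ≤ ∑ n ∈ Icc 1 N, Λ n / n / fejerDegree n := sum_nonneg fun n _ ↦
    div_nonneg (div_nonneg ArithmeticFunction.vonMangoldt_nonneg n.cast_nonneg) (Nat.cast_nonneg _)
  have hone : 1 ≤ (1 + Real.log N) ^ (3 / 5 : ℝ) :=
    Real.one_le_rpow (one_le_one_add_log N) (by norm_num)
  rw [fejerVonMangoldtSum_one_zero, ← Complex.ofReal_sub, Complex.norm_real, Real.norm_eq_abs,
    sub_right_comm]
  refine (abs_sub _ _).trans ?_
  rw [abs_of_nonneg hnonneg]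
  linarith [abs_sum_vonMangoldt_div_sub_log_le N, hdeg N]

/-- The completely multiplicative function with values `smoothedSign t p` at the primes `p`; on
primes it resonates with `n ^ (it)`. -/
noncomputable def resonator (t : ℝ) : ℕ → ℝ := primeProd (smoothedSign t)

lemma resonator_mul (t : ℝ) {m n : ℕ} (hm : m ≠ 0) (hn : n ≠ 0) :
    resonator t (m * n) = resonator t m * resonator t n := primeProd_mul _ hm hn

lemma abs_resonator_le_one (t : ℝ) (n : ℕ) : |resonator t n| ≤ 1 :=
  abs_primeProd_le_one (abs_smoothedSign_le_one t) n

lemma isMult_resonator (t : ℝ) : IsMult (resonator t) := isMult_primeProd _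

lemma exists_norm_sum_vonMangoldt_mul_resonator_sub_le {t : ℝ} (ht : t ≠ 0) :
    ∃ C : ℝ, 0 < C ∧ ∀ N : ℕ,
      ‖∑ n ∈ Icc 1 N, (Λ n : ℂ) * (resonator t n : ℂ) * (n : ℂ) ^ (-(1 + t * I))
        - (2 / Real.pi * Real.log N : ℝ)‖ ≤ C * (1 + Real.log N) ^ (3 / 5 : ℝ) := by
  obtain ⟨C₁, hC₁, hprime⟩ := exists_norm_sum_primeProd_sub_le
  obtain ⟨C₂, hC₂, hsign⟩ := exists_norm_sum_smoothedSign_sub_le ht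
  obtain ⟨C₃, hC₃, hmain⟩ := exists_norm_fejerVonMangoldtSum_one_zero_sub_log_le
  refine ⟨C₁ + C₂ + C₃, by positivity, fun N ↦ ?_⟩
  set P := (1 + Real.log N) ^ (3 / 5 : ℝ)
  have hP : 1 ≤ P := Real.one_le_rpow (one_le_one_add_log N) (by norm_num)
  have hcoeff : squareWaveCoeff 1 = 2 / Real.pi := by simp [squareWaveCoeff]
  have hharmonic : ‖squareWaveCoeff 1 • fejerVonMangoldtSum 1 0 N
      - (2 / Real.pi * Real.log N : ℝ)‖ ≤ C₃ * P := by
    have hle : |squareWaveCoeff 1| ≤ 1 := by simpa using abs_squareWaveCoeff_le 1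
    rw [← hcoeff, Complex.ofReal_mul, ← Complex.real_smul, ← smul_sub, norm_smul, Real.norm_eq_abs]
    exact (mul_le_of_le_one_left (norm_nonneg _) hle).trans (hmain N)
  calc _ ≤ C₁ + C₂ * P + C₃ * P := by
        rw [← sub_add_sub_cancel _ _ ((2 / Real.pi * Real.log N : ℝ) : ℂ),
          ← sub_add_sub_cancel _ (∑ n ∈ Icc 1 N,
            (Λ n : ℂ) * (smoothedSign t n : ℂ) * (n : ℂ) ^ (-(1 + t * I)))
            (squareWaveCoeff 1 • fejerVonMangoldtSum 1 0 N)]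
        exact norm_add₃_le.trans (add_le_add_three
          (hprime _ (abs_smoothedSign_le_one t) _ (by simp) N) (hsign N) hharmonic)
    _ ≤ (C₁ + C₂ + C₃) * P := by linarith [mul_le_mul_of_nonneg_left hP hC₁.le]

/-! ### The approximate differential equation for partial sums -/

section LogPartialSum

variable {E : Type*} [NormedAddCommGroup E] [NormedSpace ℝ E]

/-- Partial sums of `a` in the logarithmic scale: `∑_{n ≤ e^V} a(n)`. -/
noncomputable def logPartialSum (a : ℕ → E) (V : ℝ) : E := ∑ n ∈ Icc 1 ⌊Real.exp V⌋₊, a n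

/-- The sum `∑_{n ≤ e^V} (V - log n) a(n)`, a primitive of `logPartialSum a`. -/
noncomputable def logPartialSumPrimitive (a : ℕ → E) (V : ℝ) : E :=
  ∑ n ∈ Icc 1 ⌊Real.exp V⌋₊, (V - Real.log n) • a n

lemma log_le_iff_le_floor_exp {n : ℕ} (hn : 1 ≤ n) {V : ℝ} :
    Real.log n ≤ V ↔ n ≤ ⌊Real.exp V⌋₊ := by
  rw [Real.log_le_iff_le_exp (mod_cast hn), Nat.le_floor_iff (Real.exp_pos V).le]

lemma filter_log_le_Icc_floor_exp {V R : ℝ} (h : V ≤ R) :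
    {n ∈ Icc 1 ⌊Real.exp R⌋₊ | Real.log (n : ℕ) ≤ V} = Icc 1 ⌊Real.exp V⌋₊ := by
  ext n
  simp only [mem_filter, mem_Icc]
  constructor
  · rintro ⟨⟨hn, -⟩, hlog⟩
    exact ⟨hn, (log_le_iff_le_floor_exp hn).1 hlog⟩
  · rintro ⟨hn, hnV⟩
    exact ⟨⟨hn, hnV.trans (by gcongr)⟩, (log_le_iff_le_floor_exp hn).2 hnV⟩

lemma logPartialSum_eq_sum_ite (a : ℕ → E) {V R : ℝ} (h : V ≤ R) :
    logPartialSum a V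
      = ∑ n ∈ Icc 1 ⌊Real.exp R⌋₊, (if Real.log (n : ℕ) ≤ V then 1 else 0 : ℝ) • a n := by
  simp only [ite_smul, one_smul, zero_smul, ← sum_filter, filter_log_le_Icc_floor_exp h,
    logPartialSum]

lemma logPartialSumPrimitive_eq_sum_max (a : ℕ → E) {V R : ℝ} (h : V ≤ R) :
    logPartialSumPrimitive a V
      = ∑ n ∈ Icc 1 ⌊Real.exp R⌋₊, max (V - Real.log n) 0 • a n := by
  rw [logPartialSumPrimitive, ← filter_log_le_Icc_floor_exp h, sum_filter]
  refine sum_congr rfl fun n _ ↦ ?_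
  split_ifs with hn
  · rw [max_eq_left (sub_nonneg.2 hn)]
  · rw [max_eq_right (by linarith), zero_smul]

lemma hasDerivWithinAt_Ici_max_sub_zero (c x : ℝ) :
    HasDerivWithinAt (fun y ↦ max (y - c) 0) (if c ≤ x then 1 else 0) (Set.Ici x) x := by
  split_ifs with h
  · exact ((hasDerivAt_id x).sub_const c).hasDerivWithinAt.congr
      (fun y hy ↦ max_eq_left (sub_nonneg.2 (h.trans hy))) (max_eq_left (sub_nonneg.2 h))
  · refine HasDerivAt.hasDerivWithinAt ((hasDerivAt_const x (0 : ℝ)).congr_of_eventuallyEq ?_)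
    filter_upwards [eventually_lt_nhds (not_le.1 h)] with y hy
    exact max_eq_right (by linarith)

lemma hasDerivWithinAt_logPartialSumPrimitive (a : ℕ → E) (V : ℝ) :
    HasDerivWithinAt (logPartialSumPrimitive a) (logPartialSum a V) (Set.Ici V) V := by
  have hV : V ≤ V + 1 := by linarith
  rw [logPartialSum_eq_sum_ite a hV]
  refine (HasDerivWithinAt.fun_sum fun (n : ℕ) _ ↦ (hasDerivWithinAt_Ici_max_sub_zero
    (Real.log n) V).smul_const (a n)).congr_of_eventuallyEq ?_
    (logPartialSumPrimitive_eq_sum_max a hV)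
  filter_upwards [mem_nhdsWithin_of_mem_nhds (eventually_lt_nhds (lt_add_one V))] with x hx
  exact logPartialSumPrimitive_eq_sum_max a (le_of_lt hx)

lemma continuousOn_logPartialSumPrimitive (a : ℕ → E) (A R : ℝ) :
    ContinuousOn (logPartialSumPrimitive a) (Set.Icc A R) := by
  refine ContinuousOn.congr (Continuous.continuousOn ?_)
    fun x hx ↦ logPartialSumPrimitive_eq_sum_max a hx.2
  fun_prop

end LogPartialSum

lemma sum_mul_log_eq_of_mul {a : ℕ → ℂ}
    (hmul : ∀ m n : ℕ, m ≠ 0 → n ≠ 0 → a (m * n) = a m * a n) (N : ℕ) :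
    ∑ n ∈ Icc 1 N, a n * Real.log n
      = ∑ m ∈ Icc 1 N, a m * ∑ n ∈ Icc 1 (N / m), (Λ n : ℂ) * a n := by
  rw [← sum_Icc_sum_divisorsAntidiagonal]
  refine sum_congr rfl fun n _ ↦ ?_
  rw [← ArithmeticFunction.vonMangoldt_sum, ← Nat.sum_divisorsAntidiagonal' (f := fun _ d ↦ Λ d),
    Complex.ofReal_sum, mul_sum]
  refine sum_congr rfl fun x hx ↦ ?_
  obtain ⟨hprod, hn⟩ := Nat.mem_divisorsAntidiagonal.1 hx
  rw [← hprod] at hn ⊢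
  rw [hmul _ _ (left_ne_zero_of_mul hn) (right_ne_zero_of_mul hn)]
  ring

lemma sum_norm_le_one_add {a : ℕ → ℂ} (hnorm : ∀ n : ℕ, 1 ≤ n → ‖a n‖ ≤ (n : ℝ)⁻¹) {V : ℝ}
    (hV : 0 ≤ V) : ∑ n ∈ Icc 1 ⌊Real.exp V⌋₊, ‖a n‖ ≤ 1 + V := by
  have hfloor : 1 ≤ ⌊Real.exp V⌋₊ := (Nat.one_le_floor_iff _).2 (Real.one_le_exp hV)
  calc _ ≤ ∑ n ∈ Icc 1 ⌊Real.exp V⌋₊, (n : ℝ)⁻¹ :=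
        sum_le_sum fun n hn ↦ hnorm n (mem_Icc.1 hn).1
    _ ≤ 1 + Real.log ⌊Real.exp V⌋₊ := sum_Icc_inv_le_one_add_log _
    _ ≤ 1 + V := add_le_add_right ((log_le_iff_le_floor_exp hfloor).2 le_rfl) 1

lemma log_floor_exp_div_mem_Icc {V : ℝ} {m : ℕ} (hm : m ∈ Icc 1 ⌊Real.exp V⌋₊) :
    Real.log ((⌊Real.exp V⌋₊ / m : ℕ) : ℝ) ∈ Set.Icc (V - Real.log m - 1) (V - Real.log m) := by
  obtain ⟨hm1, hmV⟩ := mem_Icc.1 hm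
  have hm0 : (0 : ℝ) < m := mod_cast hm1
  have hlog : V - Real.log m = Real.log (Real.exp V / m) := by
    rw [Real.log_div (Real.exp_ne_zero V) hm0.ne', Real.log_exp]
  have hquot : 1 ≤ ⌊Real.exp V⌋₊ / m := (Nat.one_le_div_iff (by omega)).2 hmV
  rw [hlog]
  rw [← Nat.floor_div_natCast] at hquot ⊢
  set y := Real.exp V / m
  have hy : 0 < y := by positivity
  have hfloor : (1 : ℝ) ≤ ⌊y⌋₊ := mod_cast hquot
  refine ⟨?_, Real.log_le_log (by linarith) (Nat.floor_le hy.le)⟩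
  have hdouble : Real.log y ≤ Real.log ((⌊y⌋₊ : ℝ) * 2) :=
    Real.log_le_log hy (by linarith [Nat.lt_floor_add_one y])
  rw [Real.log_mul (by linarith) (by norm_num)] at hdouble
  linarith [Real.log_two_lt_d9]

lemma norm_sum_vonMangoldt_mul_sub_le {a : ℕ → ℂ} {α β C : ℝ} (hα : 0 ≤ α) (hβ : 0 ≤ β)
    (hmean : ∀ N : ℕ, ‖∑ n ∈ Icc 1 N, (Λ n : ℂ) * a n - (α * Real.log N : ℝ)‖
      ≤ C * (1 + Real.log N) ^ β) {V : ℝ} (hV : 0 ≤ V) {m : ℕ} (hm : m ∈ Icc 1 ⌊Real.exp V⌋₊) :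
    ‖∑ n ∈ Icc 1 (⌊Real.exp V⌋₊ / m), (Λ n : ℂ) * a n - (α * (V - Real.log m) : ℝ)‖
      ≤ (C + α) * (1 + V) ^ β := by
  have hC : 0 ≤ C := by simpa using (norm_nonneg _).trans (hmean 1)
  obtain ⟨hlow, hhigh⟩ := log_floor_exp_div_mem_Icc hm
  set k := ⌊Real.exp V⌋₊ / m
  have hround : ‖((α * Real.log k : ℝ) : ℂ) - (α * (V - Real.log m) : ℝ)‖ ≤ α := by
    rw [← Complex.ofReal_sub, Complex.norm_real, ← mul_sub, Real.norm_eq_abs, abs_mul,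
      abs_of_nonneg hα]
    exact mul_le_of_le_one_right hα (abs_le.2 ⟨by linarith, by linarith⟩)
  have hk : (1 + Real.log k) ^ β ≤ (1 + V) ^ β := Real.rpow_le_rpow
    (by linarith [one_le_one_add_log k]) (by linarith [Real.log_natCast_nonneg m]) hβ
  calc _ ≤ C * (1 + Real.log k) ^ β + α :=
        (norm_sub_le_norm_sub_add_norm_sub _ _ _).trans (add_le_add (hmean k) hround)
    _ ≤ C * (1 + V) ^ β + α * (1 + V) ^ β := by
        gcongr
        exact le_mul_of_one_le_right hα (Real.one_le_rpow (by linarith) hβ)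
    _ = _ := by ring

lemma norm_smul_logPartialSum_sub_smul_primitive_le {a : ℕ → ℂ} {α β C : ℝ} (hα : 0 ≤ α)
    (hβ : 0 ≤ β) (hmul : ∀ m n : ℕ, m ≠ 0 → n ≠ 0 → a (m * n) = a m * a n)
    (hnorm : ∀ n : ℕ, 1 ≤ n → ‖a n‖ ≤ (n : ℝ)⁻¹)
    (hmean : ∀ N : ℕ, ‖∑ n ∈ Icc 1 N, (Λ n : ℂ) * a n - (α * Real.log N : ℝ)‖
      ≤ C * (1 + Real.log N) ^ β) {V : ℝ} (hV : 0 ≤ V) :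
    ‖V • logPartialSum a V - (1 + α) • logPartialSumPrimitive a V‖
      ≤ (C + α) * (1 + V) ^ (1 + β) := by
  have hsum : V • logPartialSum a V - (1 + α) • logPartialSumPrimitive a V
      = ∑ m ∈ Icc 1 ⌊Real.exp V⌋₊, a m * (∑ n ∈ Icc 1 (⌊Real.exp V⌋₊ / m), (Λ n : ℂ) * a n
          - (α * (V - Real.log m) : ℝ)) := by
    simp only [mul_sub _ _ (((_ : ℝ) : ℂ))]
    rw [sum_sub_distrib, ← sum_mul_log_eq_of_mul hmul, logPartialSum, logPartialSumPrimitive,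
      smul_sum, smul_sum, ← sum_sub_distrib, ← sum_sub_distrib]
    refine sum_congr rfl fun m _ ↦ ?_
    simp only [Complex.real_smul]
    push_cast
    ring
  calc _ ≤ ∑ m ∈ Icc 1 ⌊Real.exp V⌋₊, ‖a m‖ * ((C + α) * (1 + V) ^ β) := by
        rw [hsum]
        refine norm_sum_le_of_le _ fun m hm ↦ ?_
        rw [norm_mul]
        exact mul_le_mul_of_nonneg_left (norm_sum_vonMangoldt_mul_sub_le hα hβ hmean hV hm)
          (norm_nonneg _)
    _ ≤ (1 + V) * ((C + α) * (1 + V) ^ β) := by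
        rw [← sum_mul]
        have hC : 0 ≤ C := by simpa using (norm_nonneg _).trans (hmean 1)
        gcongr
        exact sum_norm_le_one_add hnorm hV
    _ = _ := by rw [Real.rpow_add (by linarith), Real.rpow_one]; ring

lemma exists_norm_sub_le_of_norm_sub_le {E : Type*} [SeminormedAddCommGroup E] [CompleteSpace E]
    {f : ℝ → E} {b : ℝ → ℝ} {x₀ : ℝ}
    (hf : ∀ x y, x₀ ≤ x → x ≤ y → ‖f y - f x‖ ≤ b x) (hb : Tendsto b atTop (nhds 0)) :
    ∃ l, ∀ x, x₀ ≤ x → ‖l - f x‖ ≤ b x := by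
  have hcauchy : CauchySeq f := Metric.cauchySeq_iff'.2 fun ε hε ↦ by
    obtain ⟨x, hbx, hx⟩ := ((hb.eventually_lt_const hε).and (eventually_ge_atTop x₀)).exists
    exact ⟨x, fun y hy ↦ (dist_eq_norm (f y) (f x)).trans_lt ((hf x y hx hy).trans_lt hbx)⟩
  obtain ⟨l, hl⟩ := cauchySeq_tendsto_of_complete hcauchy
  refine ⟨l, fun x hx ↦ le_of_tendsto (hl.sub_const (f x)).norm ?_⟩
  filter_upwards [eventually_ge_atTop x] with y hy using hf x y hx hy

section ApproximateODE

variable {E : Type*} [NormedAddCommGroup E] [NormedSpace ℝ E] {B L : ℝ → E} {α β K : ℝ}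

lemma norm_rpow_smul_sub_rpow_smul_le (hβα : β < α) (hcont : ∀ R, ContinuousOn B (Set.Icc 1 R))
    (hderiv : ∀ V, 1 ≤ V → HasDerivWithinAt B (L V) (Set.Ici V) V)
    (hode : ∀ V : ℝ, 1 ≤ V → ‖V • L V - (1 + α) • B V‖ ≤ K * V ^ (1 + β)) {V₁ V₂ : ℝ}
    (h1 : 1 ≤ V₁) (h12 : V₁ ≤ V₂) :
    ‖V₂ ^ (-1 - α) • B V₂ - V₁ ^ (-1 - α) • B V₁‖ ≤ K / (α - β) * V₁ ^ (β - α) := by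
  have hαβ : 0 < α - β := by linarith
  have hK : 0 ≤ K := by simpa using (norm_nonneg _).trans (hode 1 le_rfl)
  have hpow : ∀ p : ℝ, ContinuousOn (fun V : ℝ ↦ V ^ p) (Set.Icc V₁ V₂) := fun p ↦
    continuousOn_id.rpow_const fun x hx ↦ .inl (by have := hx.1; dsimp; linarith)
  have hbound : ∀ V ∈ Set.Ico V₁ V₂,
      ‖V ^ (-2 - α) • (V • L V - (1 + α) • B V)‖ ≤ K * V ^ (β - α - 1) := fun V hV ↦ by
    have hV1 : 1 ≤ V := h1.trans hV.1
    rw [norm_smul, Real.norm_of_nonneg (by positivity)]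
    calc _ ≤ V ^ (-2 - α) * (K * V ^ (1 + β)) :=
          mul_le_mul_of_nonneg_left (hode V hV1) (by positivity)
      _ = _ := by
          rw [mul_left_comm, ← Real.rpow_add (by linarith)]
          ring_nf
  have himage := image_norm_le_of_norm_deriv_right_le_deriv_boundary'
    (f := fun V ↦ V ^ (-1 - α) • B V - V₁ ^ (-1 - α) • B V₁)
    (B := fun V ↦ K / (α - β) * (V₁ ^ (β - α) - V ^ (β - α)))
    (((hpow _).smul ((hcont V₂).mono (Set.Icc_subset_Icc_left h1))).sub continuousOn_const)
    (fun V hV ↦ ?_) (by simp) (continuousOn_const.mul (continuousOn_const.sub (hpow _)))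
    (fun V hV ↦ ?_) hbound (Set.right_mem_Icc.2 h12)
  · refine himage.trans (mul_le_mul_of_nonneg_left (sub_le_self _ ?_) (by positivity))
    exact Real.rpow_nonneg (by linarith) _
  · have hV0 : 0 < V := by linarith [hV.1]
    refine (((Real.hasDerivAt_rpow_const (p := -1 - α) (.inl hV0.ne')).hasDerivWithinAt.smul
      (hderiv V (h1.trans hV.1))).sub_const _).congr_deriv ?_
    rw [show V ^ (-1 - α) = V ^ (-2 - α) * V by rw [← Real.rpow_add_one hV0.ne']; ring_nf,
      show -1 - α - 1 = -2 - α by ring]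
    module
  · have hV0 : 0 < V := by linarith [hV.1]
    refine (((Real.hasDerivAt_rpow_const (p := β - α) (.inl hV0.ne')).const_sub
      _).const_mul _).hasDerivWithinAt.congr_deriv ?_
    field_simp
    ring

lemma exists_norm_sub_rpow_smul_le_of_approx_ode [CompleteSpace E] (hβα : β < α)
    (hcont : ∀ R, ContinuousOn B (Set.Icc 1 R))
    (hderiv : ∀ V, 1 ≤ V → HasDerivWithinAt B (L V) (Set.Ici V) V)
    (hode : ∀ V : ℝ, 1 ≤ V → ‖V • L V - (1 + α) • B V‖ ≤ K * V ^ (1 + β)) :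
    ∃ C₀ : E, ∃ C : ℝ, ∀ V : ℝ, 1 ≤ V → ‖L V - V ^ α • C₀‖ ≤ C * V ^ β := by
  have hdecay : Tendsto (fun V : ℝ ↦ K / (α - β) * V ^ (β - α)) atTop (nhds 0) := by
    simpa [neg_sub] using
      (tendsto_rpow_neg_atTop (sub_pos.2 hβα)).const_mul (K / (α - β))
  obtain ⟨C₁, hC₁⟩ := exists_norm_sub_le_of_norm_sub_le (f := fun V ↦ V ^ (-1 - α) • B V)
    (fun V₁ V₂ ↦ norm_rpow_smul_sub_rpow_smul_le hβα hcont hderiv hode) hdecay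
  refine ⟨(1 + α) • C₁, K + |1 + α| * (K / (α - β)), fun V hV ↦ ?_⟩
  have hV0 : 0 < V := by linarith
  have hsplit : L V - V ^ α • (1 + α) • C₁ = V⁻¹ • (V • L V - (1 + α) • B V)
      - ((1 + α) * V ^ α) • (C₁ - V ^ (-1 - α) • B V) := by
    have hB : V⁻¹ • B V = V ^ α • V ^ (-1 - α) • B V := by
      rw [smul_smul, ← Real.rpow_add hV0, show α + (-1 - α) = -1 by ring, Real.rpow_neg_one]
    rw [smul_sub V⁻¹, inv_smul_smul₀ hV0.ne', smul_comm V⁻¹, hB]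
    module
  calc _ ≤ V⁻¹ * (K * V ^ (1 + β)) + |1 + α| * V ^ α * (K / (α - β) * V ^ (β - α)) := by
        rw [hsplit]
        refine norm_sub_le_of_le ?_ ?_ <;> rw [norm_smul, Real.norm_eq_abs]
        · rw [abs_of_nonneg (by positivity)]
          exact mul_le_mul_of_nonneg_left (hode V hV) (by positivity)
        · rw [abs_mul, abs_of_nonneg (by positivity : 0 ≤ V ^ α)]
          exact mul_le_mul_of_nonneg_left (hC₁ V hV) (by positivity)
    _ = _ := by
        rw [Real.rpow_add hV0, Real.rpow_one, Real.rpow_sub hV0]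
        field_simp

end ApproximateODE

lemma exists_norm_logPartialSum_sub_le {a : ℕ → ℂ} {α β C : ℝ} (hβ : 0 ≤ β) (hβα : β < α)
    (hmul : ∀ m n : ℕ, m ≠ 0 → n ≠ 0 → a (m * n) = a m * a n)
    (hnorm : ∀ n : ℕ, 1 ≤ n → ‖a n‖ ≤ (n : ℝ)⁻¹)
    (hmean : ∀ N : ℕ, ‖∑ n ∈ Icc 1 N, (Λ n : ℂ) * a n - (α * Real.log N : ℝ)‖
      ≤ C * (1 + Real.log N) ^ β) :
    ∃ C₀ : ℂ, ∃ C' : ℝ, ∀ V : ℝ, 1 ≤ V → ‖logPartialSum a V - V ^ α • C₀‖ ≤ C' * V ^ β := by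
  have hα : 0 ≤ α := hβ.trans hβα.le
  have hC : 0 ≤ C := by simpa using (norm_nonneg _).trans (hmean 1)
  refine exists_norm_sub_rpow_smul_le_of_approx_ode (K := (C + α) * 2 ^ (1 + β)) hβα
    (continuousOn_logPartialSumPrimitive a 1)
    (fun V _ ↦ hasDerivWithinAt_logPartialSumPrimitive a V) fun V hV ↦ ?_
  refine (norm_smul_logPartialSum_sub_smul_primitive_le hα hβ hmul hnorm hmean
    (zero_le_one.trans hV)).trans ?_
  rw [mul_assoc, ← Real.mul_rpow (by norm_num) (by linarith)]
  gcongr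
  linarith

/-! ### Non-vanishing of the leading constant -/

lemma one_add_rpow_le_mul_exp {σ β u : ℝ} (h0 : 0 < σ) (h1 : σ ≤ 1) (hβ : 0 ≤ β) (hβ1 : β ≤ 1)
    (hu : 0 ≤ u) : (1 + u) ^ β ≤ 2 * σ ^ (-β) * Real.exp (u * (σ / 2)) := by
  have hinv : 1 ≤ σ⁻¹ := (one_le_inv₀ h0).2 h1
  have hlin : 1 + u ≤ 2 * σ⁻¹ * Real.exp (u * (σ / 2)) :=
    calc 1 + u ≤ 2 * σ⁻¹ + u := by linarith
      _ = 2 * σ⁻¹ * (u * (σ / 2) + 1) := by field_simp; ring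
      _ ≤ _ := by gcongr; exact Real.add_one_le_exp _
  have hself : ∀ x : ℝ, 1 ≤ x → x ^ β ≤ x := fun x hx ↦ by
    simpa using Real.rpow_le_rpow_of_exponent_le hx hβ1
  calc (1 + u) ^ β ≤ (2 * σ⁻¹ * Real.exp (u * (σ / 2))) ^ β := by gcongr
    _ = 2 ^ β * σ ^ (-β) * Real.exp (u * (σ / 2)) ^ β := by
        rw [Real.mul_rpow (by positivity) (by positivity),
          Real.mul_rpow (by positivity) (by positivity), Real.inv_rpow h0.le, Real.rpow_neg h0.le]
    _ ≤ 2 * σ ^ (-β) * Real.exp (u * (σ / 2)) := by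
        gcongr
        · exact hself 2 one_le_two
        · exact hself _ (Real.one_le_exp (by positivity))

lemma norm_LSeries_le_of_norm_sum_le_rpow {c : ℕ → ℂ} {D r σ : ℝ} (hr : 0 ≤ r) (hrσ : r < σ)
    (hs : LSeriesSummable c σ) (hc : ∀ N : ℕ, 1 ≤ N → ‖∑ n ∈ Icc 1 N, c n‖ ≤ D * (N : ℝ) ^ r) :
    ‖LSeries c σ‖ ≤ σ / (σ - r) * D := by
  have hD : 0 ≤ D := by simpa using (norm_nonneg _).trans (hc 1 le_rfl)
  have hO : (fun n ↦ ∑ k ∈ Icc 1 n, c k) =O[atTop] fun n : ℕ ↦ (n : ℝ) ^ r := by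
    refine Asymptotics.IsBigO.of_bound D ?_
    filter_upwards [eventually_ge_atTop 1] with n hn
    rw [Real.norm_of_nonneg (by positivity)]
    exact hc n hn
  have hintegral : ‖∫ t in Set.Ioi (1 : ℝ), (∑ k ∈ Icc 1 ⌊t⌋₊, c k) * (t : ℂ) ^ (-((σ : ℂ) + 1))‖
      ≤ ∫ t in Set.Ioi (1 : ℝ), D * t ^ (r - σ - 1) := by
    refine MeasureTheory.norm_integral_le_of_norm_le
      ((integrableOn_Ioi_rpow_of_lt (by linarith) one_pos).const_mul _)
      ((MeasureTheory.ae_restrict_mem measurableSet_Ioi).mono fun t (ht : 1 < t) ↦ ?_)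
    have ht0 : 0 < t := one_pos.trans ht
    have hre : (-((σ : ℂ) + 1)).re = -σ - 1 := by simp; ring
    rw [norm_mul, Complex.norm_cpow_eq_rpow_re_of_pos ht0, hre]
    calc _ ≤ D * t ^ r * t ^ (-σ - 1) := by
          gcongr
          refine (hc _ ((Nat.one_le_floor_iff t).2 ht.le)).trans ?_
          gcongr
          exact Nat.floor_le ht0.le
      _ = _ := by rw [mul_assoc, ← Real.rpow_add ht0]; ring_nf
  rw [MeasureTheory.integral_const_mul, integral_Ioi_rpow_of_lt (by linarith) one_pos,
    Real.one_rpow, sub_add_cancel, neg_div, ← div_neg, neg_sub] at hintegral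
  calc ‖LSeries c σ‖ ≤ σ * (D * (1 / (σ - r))) := by
        rw [LSeries_eq_mul_integral c hr (by simpa using hrσ) hs hO, norm_mul, Complex.norm_real,
          Real.norm_of_nonneg (hr.trans hrσ.le)]
        exact mul_le_mul_of_nonneg_left hintegral (hr.trans hrσ.le)
    _ = σ / (σ - r) * D := by ring

lemma norm_LSeries_le_of_norm_sum_le_log {c : ℕ → ℂ} {C β σ : ℝ} (hβ : 0 ≤ β) (hβ1 : β ≤ 1)
    (hc : ∀ N : ℕ, 1 ≤ N → ‖∑ n ∈ Icc 1 N, c n‖ ≤ C * (1 + Real.log N) ^ β)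
    (h0 : 0 < σ) (h1 : σ ≤ 1) (hs : LSeriesSummable c σ) : ‖LSeries c σ‖ ≤ 4 * C * σ ^ (-β) := by
  have hC : 0 ≤ C := by simpa using (norm_nonneg _).trans (hc 1 le_rfl)
  refine (norm_LSeries_le_of_norm_sum_le_rpow (D := C * (2 * σ ^ (-β))) (half_pos h0).le
    (half_lt_self h0) hs fun N hN ↦ ?_).trans_eq (by field_simp; ring)
  rw [mul_assoc, Real.rpow_def_of_pos (x := N) (mod_cast hN)]
  exact (hc N hN).trans (mul_le_mul_of_nonneg_left
    (one_add_rpow_le_mul_exp h0 h1 hβ hβ1 (Real.log_natCast_nonneg N)) hC)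

lemma LSeries_natCast_inv {s : ℂ} (hs : 0 < s.re) :
    LSeries (fun n : ℕ ↦ (n : ℂ)⁻¹) s = riemannZeta (1 + s) := by
  have hs1 : 1 + s ≠ 0 := fun h ↦ by
    have := congrArg Complex.re h
    simp only [Complex.add_re, Complex.one_re, Complex.zero_re] at this
    linarith
  rw [zeta_eq_tsum_one_div_nat_cpow (by simpa using hs), LSeries]
  refine tsum_congr fun n ↦ ?_
  rcases eq_or_ne n 0 with rfl | hn
  · simp [hs1]
  · rw [LSeries.term_of_ne_zero hn, Complex.cpow_add _ _ (mod_cast hn), Complex.cpow_one]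
    field_simp

lemma abs_sum_Icc_inv_sub_log_le_one (N : ℕ) :
    |∑ n ∈ Icc 1 N, (n : ℝ)⁻¹ - Real.log N| ≤ 1 := by
  have hlow : Real.log N ≤ ∑ n ∈ Icc 1 N, (n : ℝ)⁻¹ := by
    simpa [harmonic_eq_sum_Icc] using log_le_harmonic_floor (N : ℝ) N.cast_nonneg
  exact abs_le.2 ⟨by linarith, by linarith [sum_Icc_inv_le_one_add_log N]⟩

section NormLeInv

variable {a : ℕ → ℂ} (hnorm : ∀ n : ℕ, 1 ≤ n → ‖a n‖ ≤ (n : ℝ)⁻¹)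
include hnorm

lemma abscissaOfAbsConv_lt_of_norm_le_inv {s : ℂ} (hs : 0 < s.re) :
    LSeries.abscissaOfAbsConv a < s.re := by
  have h := LSeries.abscissaOfAbsConv_le_of_le_const_mul_rpow (f := a) (x := -1)
    ⟨1, fun n hn ↦ by
      simpa [Real.rpow_neg_one] using hnorm n (Nat.one_le_iff_ne_zero.2 hn)⟩
  have hcast : ((-1 : ℝ) : EReal) + 1 = 0 := by
    rw [← EReal.coe_one, ← EReal.coe_add, neg_add_cancel, EReal.coe_zero]
  exact (h.trans_eq hcast).trans_lt (mod_cast hs)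

lemma LSeriesSummable_of_norm_le_inv {s : ℂ} (hs : 0 < s.re) : LSeriesSummable a s :=
  LSeriesSummable_of_abscissaOfAbsConv_lt_re (abscissaOfAbsConv_lt_of_norm_le_inv hnorm hs)

lemma LSeriesSummable_vonMangoldt_mul_of_norm_le_inv {s : ℂ} (hs : 0 < s.re) :
    LSeriesSummable (fun n ↦ (Λ n : ℂ) * a n) s := by
  have h := LSeriesSummable_logMul_of_lt_re (abscissaOfAbsConv_lt_of_norm_le_inv hnorm hs)
  refine Summable.of_norm_bounded h.norm fun n ↦ LSeries.norm_term_le _ ?_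
  rw [LSeries.logMul, norm_mul, norm_mul, ← Complex.natCast_log, Complex.norm_real,
    Complex.norm_real, Real.norm_of_nonneg ArithmeticFunction.vonMangoldt_nonneg,
    Real.norm_of_nonneg (Real.log_natCast_nonneg n)]
  gcongr
  exact ArithmeticFunction.vonMangoldt_le_log

lemma div_sub_le_re_LSeries_vonMangoldt_mul {α β C σ : ℝ} (hα : 0 ≤ α) (hβ : 0 ≤ β) (hβ1 : β ≤ 1)
    (hmean : ∀ N : ℕ, ‖∑ n ∈ Icc 1 N, (Λ n : ℂ) * a n - (α * Real.log N : ℝ)‖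
      ≤ C * (1 + Real.log N) ^ β) (h0 : 0 < σ) (h1 : σ ≤ 1) :
    α / σ - (4 * (C + α) + 3 * α) * σ ^ (-β) ≤ (LSeries (fun n ↦ (Λ n : ℂ) * a n) σ).re := by
  have hre : 0 < (σ : ℂ).re := h0
  have hsΛ := LSeriesSummable_vonMangoldt_mul_of_norm_le_inv hnorm hre
  have hsinv : LSeriesSummable ((α : ℂ) • fun n : ℕ ↦ (n : ℂ)⁻¹) σ :=
    (LSeriesSummable_of_norm_le_inv (fun n _ ↦ by simp) hre).smul _
  have hpartial : ∀ N : ℕ, 1 ≤ N → ‖∑ n ∈ Icc 1 N,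
      ((fun n ↦ (Λ n : ℂ) * a n) - ((α : ℂ) • fun n : ℕ ↦ (n : ℂ)⁻¹)) n‖
        ≤ (C + α) * (1 + Real.log N) ^ β := fun N _ ↦ by
    have hharm : ‖((α * (∑ n ∈ Icc 1 N, (n : ℝ)⁻¹ - Real.log N) : ℝ) : ℂ)‖ ≤ α := by
      rw [Complex.norm_real, Real.norm_eq_abs, abs_mul, abs_of_nonneg hα]
      exact mul_le_of_le_one_right hα (abs_sum_Icc_inv_sub_log_le_one N)
    calc _ = ‖∑ n ∈ Icc 1 N, (Λ n : ℂ) * a n - (α * Real.log N : ℝ)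
          - (α * (∑ n ∈ Icc 1 N, (n : ℝ)⁻¹ - Real.log N) : ℝ)‖ := by
          simp only [Pi.sub_apply, Pi.smul_apply, smul_eq_mul, sum_sub_distrib, ← mul_sum]
          push_cast
          ring_nf
      _ ≤ C * (1 + Real.log N) ^ β + α := norm_sub_le_of_le (hmean N) hharm
      _ ≤ C * (1 + Real.log N) ^ β + α * (1 + Real.log N) ^ β := by
          gcongr
          exact le_mul_of_one_le_right hα (Real.one_le_rpow (one_le_one_add_log N) hβ)
      _ = _ := by ring
  have hdiff := norm_LSeries_le_of_norm_sum_le_log hβ hβ1 hpartial h0 h1 (hsΛ.sub hsinv)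
  rw [LSeries_sub hsΛ hsinv, LSeries_smul, LSeries_natCast_inv hre] at hdiff
  have hΛ := abs_le.1 ((Complex.abs_re_le_norm _).trans hdiff)
  have hζ := abs_le.1 ((Complex.abs_re_le_norm _).trans (norm_riemannZeta_one_add_sub_le h0))
  rw [Complex.sub_re, Complex.re_ofReal_mul] at hΛ
  rw [Complex.sub_re, Complex.ofReal_re] at hζ
  have hζα : α * (1 / σ - 3) ≤ α * (riemannZeta (1 + σ)).re := by gcongr; linarith [hζ.1]
  have hpow : α ≤ α * σ ^ (-β) := le_mul_of_one_le_right hα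
    (Real.one_le_rpow_of_pos_of_le_one_of_nonpos h0 h1 (by linarith))
  have hdiv : α * (1 / σ - 3) = α / σ - 3 * α := by ring
  linarith [hΛ.1]

variable (hmul : ∀ m n : ℕ, m ≠ 0 → n ≠ 0 → a (m * n) = a m * a n)
include hmul

lemma LSeries_ne_zero_of_norm_le_inv (ha1 : a 1 = 1) {s : ℂ} (hs : 0 < s.re) :
    LSeries a s ≠ 0 := by
  let f : ℕ →*₀ ℂ :=
    { toFun := LSeries.term a s
      map_zero' := LSeries.term_zero a s
      map_one' := by simp [LSeries.term_of_ne_zero, ha1]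
      map_mul' := fun m n ↦ by
        rcases eq_or_ne m 0 with rfl | hm
        · simp
        rcases eq_or_ne n 0 with rfl | hn
        · simp
        rw [LSeries.term_of_ne_zero (mul_ne_zero hm hn), LSeries.term_of_ne_zero hm,
          LSeries.term_of_ne_zero hn, hmul m n hm hn, Nat.cast_mul,
          Complex.natCast_mul_natCast_cpow, mul_div_mul_comm] }
  have heuler : _ = LSeries a s := EulerProduct.exp_tsum_primes_log_eq_tsum (f := f)
    (LSeriesSummable_of_norm_le_inv hnorm hs).norm
  exact heuler ▸ Complex.exp_ne_zero _

lemma hasDerivAt_LSeries_of_mul {s : ℂ} (hs : 0 < s.re) :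
    HasDerivAt (LSeries a) (-(LSeries (fun n ↦ (Λ n : ℂ) * a n) s * LSeries a s)) s := by
  refine (LSeries_hasDerivAt (abscissaOfAbsConv_lt_of_norm_le_inv hnorm hs)).congr_deriv ?_
  rw [← LSeries_convolution' (LSeriesSummable_vonMangoldt_mul_of_norm_le_inv hnorm hs)
    (LSeriesSummable_of_norm_le_inv hnorm hs)]
  congr 1
  refine LSeries_congr (fun {n} _ ↦ ?_) _
  rw [LSeries.convolution_def, LSeries.logMul, ← Complex.natCast_log,
    ← sum_divisorsAntidiagonal_vonMangoldt, Complex.ofReal_sum, sum_mul]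
  refine sum_congr rfl fun x hx ↦ ?_
  obtain ⟨hprod, hn⟩ := Nat.mem_divisorsAntidiagonal.1 hx
  rw [← hprod] at hn ⊢
  rw [hmul _ _ (left_ne_zero_of_mul hn) (right_ne_zero_of_mul hn)]
  ring

lemma hasDerivAt_norm_LSeries_sq_of_mul {σ : ℝ} (h0 : 0 < σ) :
    HasDerivAt (fun x : ℝ ↦ ‖LSeries a x‖ ^ 2)
      (-(2 * (LSeries (fun n ↦ (Λ n : ℂ) * a n) σ).re * ‖LSeries a σ‖ ^ 2)) σ := by
  refine (hasDerivAt_LSeries_of_mul hnorm hmul (show 0 < (σ : ℂ).re from h0)).comp_ofReal.norm_sq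
    |>.congr_deriv ?_
  rw [Complex.inner, ← Complex.normSq_eq_norm_sq, Complex.normSq_apply]
  simp only [Complex.mul_re, Complex.neg_re, Complex.neg_im, Complex.conj_re, Complex.conj_im,
    Complex.mul_im]
  ring

end NormLeInv

lemma mul_exp_neg_le_mul_rpow_of_hasDerivAt {F R : ℝ → ℝ} {α β K : ℝ} (hβ : β < 1) (hK : 0 ≤ K)
    (hF : ∀ σ ∈ Set.Ioc 0 1, 0 ≤ F σ)
    (hderiv : ∀ σ ∈ Set.Ioc 0 1, HasDerivAt F (-(R σ * F σ)) σ)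
    (hR : ∀ σ ∈ Set.Ioc (0 : ℝ) 1, α / σ - K * σ ^ (-β) ≤ R σ) {σ : ℝ} (hσ : σ ∈ Set.Ioc 0 1) :
    F 1 * Real.exp (-(K / (1 - β))) ≤ F σ * σ ^ α := by
  have hβ' : 0 < 1 - β := sub_pos.2 hβ
  set W : ℝ → ℝ := fun x ↦ x ^ α * Real.exp (-(K / (1 - β)) * x ^ (1 - β))
  have hG : ∀ x ∈ Set.Ioc (0 : ℝ) 1, HasDerivAt (fun x ↦ F x * W x)
      (F x * W x * (α / x - K * x ^ (-β) - R x)) x := fun x hx ↦ by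
    have hpow := Real.hasDerivAt_rpow_const (p := α) (.inl hx.1.ne')
    have hexp := ((Real.hasDerivAt_rpow_const (p := 1 - β) (.inl hx.1.ne')).const_mul
      (-(K / (1 - β)))).exp
    refine ((hderiv x hx).mul (hpow.mul hexp)).congr_deriv ?_
    rw [Real.rpow_sub_one hx.1.ne', sub_sub_cancel_left]
    simp only [W, Pi.mul_apply]
    field_simp
    ring
  have hanti : AntitoneOn (fun x ↦ F x * W x) (Set.Ioc 0 1) := by
    refine antitoneOn_of_deriv_nonpos (convex_Ioc 0 1)
      (fun x hx ↦ (hG x hx).continuousAt.continuousWithinAt)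
      (fun x hx ↦ (hG x (interior_subset hx)).differentiableAt.differentiableWithinAt)
      fun x hx ↦ ?_
    replace hx := interior_subset hx
    have hx0 : 0 < x := hx.1
    rw [(hG x hx).deriv]
    exact mul_nonpos_of_nonneg_of_nonpos (mul_nonneg (hF x hx) (by positivity))
      (sub_nonpos.2 (hR x hx))
  calc F 1 * Real.exp (-(K / (1 - β))) = F 1 * W 1 := by simp [W]
    _ ≤ F σ * W σ := hanti hσ ⟨one_pos, le_rfl⟩ hσ.2
    _ ≤ F σ * σ ^ α := by
        have hσ0 : 0 < σ := hσ.1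
        refine mul_le_mul_of_nonneg_left (mul_le_of_le_one_right (by positivity) ?_) (hF σ hσ)
        rw [Real.exp_le_one_iff, neg_mul, neg_nonpos]
        positivity

section Selberg

variable {a : ℕ → ℂ} {α β C : ℝ} (ha1 : a 1 = 1)
  (hnorm : ∀ n : ℕ, 1 ≤ n → ‖a n‖ ≤ (n : ℝ)⁻¹)
  (hmul : ∀ m n : ℕ, m ≠ 0 → n ≠ 0 → a (m * n) = a m * a n)
  (hmean : ∀ N : ℕ, ‖∑ n ∈ Icc 1 N, (Λ n : ℂ) * a n - (α * Real.log N : ℝ)‖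
    ≤ C * (1 + Real.log N) ^ β)
include ha1 hnorm hmul hmean

lemma exists_le_norm_LSeries_sq_mul_rpow (hα : 0 ≤ α) (hβ : 0 ≤ β) (hβ1 : β < 1) :
    ∃ e : ℝ, 0 < e ∧ ∀ σ ∈ Set.Ioc (0 : ℝ) 1, e ≤ ‖LSeries a σ‖ ^ 2 * σ ^ (2 * α) := by
  have hC : 0 ≤ C := by simpa using (norm_nonneg _).trans (hmean 1)
  set K := 4 * (C + α) + 3 * α
  have hne : LSeries a ((1 : ℝ) : ℂ) ≠ 0 :=
    LSeries_ne_zero_of_norm_le_inv hnorm hmul ha1 (by simp)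
  refine ⟨‖LSeries a ((1 : ℝ) : ℂ)‖ ^ 2 * Real.exp (-(2 * K / (1 - β))), by positivity,
    fun σ hσ ↦ mul_exp_neg_le_mul_rpow_of_hasDerivAt (F := fun x ↦ ‖LSeries a x‖ ^ 2) hβ1
      (by positivity) (fun _ _ ↦ by positivity)
      (fun x hx ↦ hasDerivAt_norm_LSeries_sq_of_mul hnorm hmul hx.1) (fun x hx ↦ ?_) hσ⟩
  have h := div_sub_le_re_LSeries_vonMangoldt_mul hnorm hα hβ hβ1.le hmean hx.1 hx.2
  rw [mul_div_assoc, mul_assoc, ← mul_sub]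
  gcongr

/-- If the partial sums of `a` were `O((log N)^β)`, its `L`-series would be `O(σ^{-β})`, which is
smaller than `σ^{-α}`. -/
lemma not_norm_sum_le_one_add_log_rpow (hβ : 0 ≤ β) (hβα : β < α) (hβ1 : β < 1)
    (D : ℝ) : ¬ ∀ N : ℕ, 1 ≤ N → ‖∑ n ∈ Icc 1 N, a n‖ ≤ D * (1 + Real.log N) ^ β := by
  intro hsum
  obtain ⟨e, he, hlow⟩ := exists_le_norm_LSeries_sq_mul_rpow ha1 hnorm hmul hmean
    (hβ.trans hβα.le) hβ hβ1
  have hup : ∀ σ ∈ Set.Ioc (0 : ℝ) 1, e ≤ (4 * D) ^ 2 * σ ^ (2 * (α - β)) := fun σ hσ ↦ by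
    have hσ0 : 0 < σ := hσ.1
    have hL := norm_LSeries_le_of_norm_sum_le_log hβ hβ1.le hsum hσ.1 hσ.2
      (LSeriesSummable_of_norm_le_inv hnorm hσ.1)
    calc e ≤ ‖LSeries a σ‖ ^ 2 * σ ^ (2 * α) := hlow σ hσ
      _ ≤ (4 * D * σ ^ (-β)) ^ 2 * σ ^ (2 * α) := by gcongr
      _ = (4 * D) ^ 2 * (σ ^ (-β) * σ ^ (-β) * σ ^ (2 * α)) := by ring
      _ = _ := by rw [← Real.rpow_add hσ0, ← Real.rpow_add hσ0]; ring_nf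
  have hlim : Tendsto (fun σ : ℝ ↦ (4 * D) ^ 2 * σ ^ (2 * (α - β)))
      (nhdsWithin 0 (Set.Ioi 0)) (nhds 0) := by
    have hexp : 0 < 2 * (α - β) := by linarith
    have h := (Real.continuousAt_rpow_const 0 (2 * (α - β)) (.inr hexp.le)).tendsto
    rw [Real.zero_rpow hexp.ne'] at h
    simpa using (h.mono_left nhdsWithin_le_nhds).const_mul ((4 * D) ^ 2)
  refine he.not_ge (ge_of_tendsto hlim ?_)
  filter_upwards [Ioc_mem_nhdsGT (zero_lt_one' ℝ)] with σ hσ using hup σ hσ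

theorem exists_ne_zero_norm_logPartialSum_sub_le (hβ : 0 ≤ β) (hβα : β < α) (hβ1 : β < 1) :
    ∃ C₀ : ℂ, C₀ ≠ 0 ∧ ∃ C' : ℝ, ∀ V : ℝ, 1 ≤ V →
      ‖logPartialSum a V - V ^ α • C₀‖ ≤ C' * V ^ β := by
  obtain ⟨C₀, C', hasymp⟩ := exists_norm_logPartialSum_sub_le hβ hβα hmul hnorm hmean
  refine ⟨C₀, ?_, C', hasymp⟩
  rintro rfl
  have hC' : 0 ≤ C' := by simpa using (norm_nonneg _).trans (hasymp 1 le_rfl)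
  refine not_norm_sum_le_one_add_log_rpow ha1 hnorm hmul hmean hβ hβα hβ1 (C' + 2)
    fun N hN ↦ ?_
  have hlog := Real.log_natCast_nonneg N
  have hexp : ⌊Real.exp (Real.log N)⌋₊ = N := by
    rw [Real.exp_log (mod_cast hN), Nat.floor_natCast]
  have hone : 1 ≤ (1 + Real.log N) ^ β := Real.one_le_rpow (by linarith) hβ
  rcases le_total 1 (Real.log N) with h | h
  · have hV := hasymp _ h
    rw [smul_zero, sub_zero, logPartialSum, hexp] at hV
    refine hV.trans ?_
    gcongr <;> linarith
  · have htriv := sum_norm_le_one_add hnorm hlog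
    rw [hexp] at htriv
    calc _ ≤ 2 * 1 := (norm_sum_le _ _).trans (by linarith)
      _ ≤ (C' + 2) * (1 + Real.log N) ^ β := by gcongr; linarith

end Selberg

/-- The coefficients `f(n) n^{-1-it}`, where `f = resonator t`. -/
noncomputable def twistedResonator (t : ℝ) (n : ℕ) : ℂ :=
  (resonator t n : ℂ) * (n : ℂ) ^ (-(1 + t * I))

lemma norm_twistedResonator_le_inv (t : ℝ) {n : ℕ} (hn : 1 ≤ n) :
    ‖twistedResonator t n‖ ≤ (n : ℝ)⁻¹ := by
  rw [twistedResonator, norm_mul, Complex.norm_real, Real.norm_eq_abs]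
  exact (mul_le_of_le_one_left (norm_nonneg _) (abs_resonator_le_one t n)).trans
    (norm_natCast_cpow_neg_le_inv hn (by simp))

theorem exists_ne_zero_norm_logPartialSum_twistedResonator_sub_le {t : ℝ} (ht : t ≠ 0) :
    ∃ C₀ : ℂ, C₀ ≠ 0 ∧ ∃ C : ℝ, ∀ V : ℝ, 1 ≤ V →
      ‖logPartialSum (twistedResonator t) V - V ^ (2 / Real.pi) • C₀‖ ≤ C * V ^ (3 / 5 : ℝ) := by
  obtain ⟨C, -, hmean⟩ := exists_norm_sum_vonMangoldt_mul_resonator_sub_le ht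
  have hexp : (3 / 5 : ℝ) < 2 / Real.pi := by
    rw [div_lt_div_iff₀ (by norm_num) Real.pi_pos]
    linarith [Real.pi_lt_d2]
  refine exists_ne_zero_norm_logPartialSum_sub_le (C := C) ?_
    (fun n hn ↦ norm_twistedResonator_le_inv t hn) (fun m n hm hn ↦ ?_) (fun N ↦ ?_)
    (by norm_num) hexp (by norm_num)
  · simp [twistedResonator, (isMult_resonator t).1]
  · simp only [twistedResonator]
    rw [resonator_mul t hm hn, Nat.cast_mul, Complex.natCast_mul_natCast_cpow, Complex.ofReal_mul]
    ring
  · simpa only [twistedResonator, mul_assoc] using hmean N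

/-! ### Non-vanishing of Fourier transforms -/

open scoped FourierTransform in
lemma exists_ne_zero_fourier_ne_zero {E : Type*} [NormedAddCommGroup E] [NormedSpace ℂ E]
    [CompleteSpace E] {k : ℝ → E} (hk : MeasureTheory.Integrable k) {x : ℝ}
    (hc : ContinuousAt k x) (hx : k x ≠ 0) : ∃ ξ : ℝ, ξ ≠ 0 ∧ 𝓕 k ξ ≠ 0 := by
  by_contra! h
  have hae : 𝓕 k =ᵐ[MeasureTheory.volume] 0 := by
    filter_upwards [MeasureTheory.Measure.ae_ne MeasureTheory.volume (0 : ℝ)] with ξ hξ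
    exact h ξ hξ
  have hinv := hk.fourierInv_fourier_eq
    ((MeasureTheory.integrable_zero ℝ E MeasureTheory.volume).congr hae.symm) hc
  rw [Real.fourierInv_eq', MeasureTheory.integral_eq_zero_of_ae
    (hae.mono fun ξ hξ ↦ by simp [hξ])] at hinv
  exact hx hinv.symm

lemma exists_ne_zero_integral_mul_exp_ne_zero {k : ℝ → ℂ} (hk : MeasureTheory.Integrable k) {x : ℝ}
    (hc : ContinuousAt k x) (hx : k x ≠ 0) :
    ∃ t : ℝ, t ≠ 0 ∧ ∫ v, k v * Complex.exp (-(t * v * I)) ≠ 0 := by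
  obtain ⟨ξ, hξ, hne⟩ := exists_ne_zero_fourier_ne_zero hk hc hx
  refine ⟨2 * Real.pi * ξ, by positivity, fun h ↦ hne ?_⟩
  rw [Real.fourier_real_eq_integral_exp_smul, ← h]
  refine MeasureTheory.integral_congr_ae (Eventually.of_forall fun v ↦ ?_)
  simp only [smul_eq_mul]
  rw [mul_comm]
  congr 2
  push_cast
  ring

/-! ### Exponentially decaying kernels -/

section ExpDecay

variable {k : ℝ → ℂ} {C L : ℝ}

lemma integrable_of_norm_le_exp_neg (hk : Measurable k)
    (hC : ∀ v, ‖k v‖ ≤ C * Real.exp (-v)) (hL : ∀ v, v < -L → k v = 0) :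
    MeasureTheory.Integrable k := by
  rw [← MeasureTheory.integrableOn_univ]
  refine MeasureTheory.IntegrableOn.of_forall_sdiff_eq_zero (s := Set.Ici (-L)) ?_
    MeasurableSet.univ fun v hv ↦ hL v (not_le.1 hv.2)
  rw [integrableOn_Ici_iff_integrableOn_Ioi]
  exact ((integrableOn_exp_neg_Ioi _).const_mul C).mono' hk.aestronglyMeasurable
    (Eventually.of_forall hC)

lemma norm_setIntegral_Ioi_le_mul_exp_neg (hC : ∀ v, ‖k v‖ ≤ C * Real.exp (-v)) (b : ℝ) :
    ‖∫ v in Set.Ioi b, k v‖ ≤ C * Real.exp (-b) := by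
  rw [← integral_exp_neg_Ioi, ← MeasureTheory.integral_const_mul]
  exact MeasureTheory.norm_integral_le_of_norm_le ((integrableOn_exp_neg_Ioi b).const_mul C)
    (Eventually.of_forall hC)

lemma norm_integral_Iic_sub_le (hk : MeasureTheory.Integrable k) (hL0 : 0 ≤ L)
    (hC : ∀ v, ‖k v‖ ≤ C * Real.exp (-v)) (hL : ∀ v, v < -L → k v = 0) (v : ℝ) :
    ‖(∫ s in Set.Iic v, k s) - (if 0 ≤ v then 1 else 0 : ℝ) • ∫ s, k s‖
      ≤ if -L ≤ v then C * Real.exp L * Real.exp (-v) else 0 := by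
  have hC0 : 0 ≤ C := by simpa using (norm_nonneg _).trans (hC 0)
  have hsplit : (∫ s in Set.Iic v, k s) + ∫ s in Set.Ioi v, k s = ∫ s, k s := by
    rw [← Set.compl_Iic]
    exact MeasureTheory.integral_add_compl measurableSet_Iic hk
  rcases le_or_gt 0 v with hv | hv
  · rw [if_pos hv, if_pos (by linarith), one_smul, ← hsplit, sub_add_cancel_left, norm_neg]
    refine (norm_setIntegral_Ioi_le_mul_exp_neg hC v).trans ?_
    gcongr
    exact le_mul_of_one_le_right hC0 (Real.one_le_exp hL0)
  rw [if_neg (not_le.2 hv), zero_smul, sub_zero]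
  split_ifs with hvL
  · have hrestrict : ∫ s in Set.Iic v, k s = ∫ s in Set.Ioi (-L), (Set.Iic v).indicator k s := by
      rw [← MeasureTheory.integral_indicator measurableSet_Iic,
        ← MeasureTheory.integral_Ici_eq_integral_Ioi,
        MeasureTheory.setIntegral_eq_integral_of_forall_compl_eq_zero]
      exact fun s hs ↦ Set.indicator_apply_eq_zero.2 fun _ ↦ hL s (not_le.1 hs)
    rw [hrestrict]
    refine (norm_setIntegral_Ioi_le_mul_exp_neg (fun s ↦
      (norm_indicator_le_norm_self k s).trans (hC s)) (-L)).trans ?_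
    rw [neg_neg]
    exact le_mul_of_one_le_right (by positivity) (Real.one_le_exp (by linarith))
  · rw [MeasureTheory.setIntegral_eq_zero_of_forall_eq_zero, norm_zero]
    exact fun s (hs : s ≤ v) ↦ hL s (hs.trans_lt (not_le.1 hvL))

lemma norm_sum_mul_integral_Iic_sub_le (hk : MeasureTheory.Integrable k) (hL0 : 0 ≤ L)
    (hC : ∀ v, ‖k v‖ ≤ C * Real.exp (-v)) (hL : ∀ v, v < -L → k v = 0) {a : ℕ → ℂ}
    (ha : ∀ n, 1 ≤ n → ‖a n‖ ≤ (n : ℝ)⁻¹) {V R : ℝ} (hR : V + L ≤ R) :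
    ‖∑ n ∈ Icc 1 ⌊Real.exp R⌋₊, a n * (∫ s in Set.Iic (V - Real.log (n : ℕ)), k s)
      - logPartialSum a V * ∫ s, k s‖ ≤ C * Real.exp L ^ 2 := by
  have hterm : ∀ n ∈ Icc 1 ⌊Real.exp R⌋₊,
      ‖a n * (∫ s in Set.Iic (V - Real.log n), k s)
        - (if Real.log n ≤ V then 1 else 0 : ℝ) • a n * ∫ s, k s‖
        ≤ if Real.log n ≤ V + L then C * Real.exp L * Real.exp (-V) else 0 := fun n hn ↦ by
    have h1 := (mem_Icc.1 hn).1
    have hn0 : (0 : ℝ) < n := mod_cast h1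
    have hstep := norm_integral_Iic_sub_le hk hL0 hC hL (V - Real.log n)
    simp only [sub_nonneg, neg_le_sub_iff_le_add] at hstep
    calc _ = ‖a n‖ * ‖(∫ s in Set.Iic (V - Real.log n), k s)
          - (if Real.log n ≤ V then 1 else 0 : ℝ) • ∫ s, k s‖ := by
          rw [← norm_mul, mul_sub, smul_mul_assoc, mul_smul_comm]
      _ ≤ (n : ℝ)⁻¹ * (if Real.log n ≤ V + L then
            C * Real.exp L * Real.exp (-(V - Real.log n)) else 0) := by
          gcongr
          exact ha n h1
      _ = _ := by
          split_ifs
          · rw [neg_sub, sub_eq_add_neg, Real.exp_add, Real.exp_log hn0]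
            field_simp
          · exact mul_zero _
  have hC0 : 0 ≤ C := by simpa using (norm_nonneg _).trans (hC 0)
  rw [logPartialSum_eq_sum_ite a (by linarith : V ≤ R), sum_mul, ← sum_sub_distrib]
  refine (norm_sum_le_of_le _ hterm).trans ?_
  rw [← sum_filter, filter_log_le_Icc_floor_exp hR, sum_const, Nat.card_Icc, nsmul_eq_mul,
    Nat.add_sub_cancel]
  calc (⌊Real.exp (V + L)⌋₊ : ℝ) * (C * Real.exp L * Real.exp (-V))
      ≤ Real.exp (V + L) * (C * Real.exp L * Real.exp (-V)) := by
        gcongr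
        exact Nat.floor_le (Real.exp_pos _).le
    _ = C * Real.exp L ^ 2 := by rw [Real.exp_add, Real.exp_neg]; field_simp

end ExpDecay

/-! ### The error term as a convolution -/

lemma Lsum_eq_sum_ite (f : ℕ → ℝ) {x : ℝ} {N : ℕ} (hN : ⌊x⌋₊ ≤ N) :
    Lsum f x = ∑ n ∈ Icc 1 N, f n / n * (if 1 ≤ x / (n : ℕ) then 1 else 0) := by
  have hfilter : {n ∈ Icc 1 N | 1 ≤ x / (n : ℕ)} = Icc 1 ⌊x⌋₊ := by
    ext n
    simp only [mem_filter, mem_Icc, and_assoc, and_congr_right_iff]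
    intro hn
    rw [one_le_div (mod_cast hn), Nat.le_floor_iff' (Nat.one_le_iff_ne_zero.1 hn)]
    exact ⟨fun h ↦ h.2, fun h ↦ ⟨((Nat.le_floor_iff' (Nat.one_le_iff_ne_zero.1 hn)).2 h).trans hN,
      h⟩⟩
  simp only [mul_ite, mul_one, mul_zero, ← sum_filter, hfilter, Lsum]

lemma sum_dconv (f : ℕ → ℝ) (N : ℕ) :
    ∑ n ∈ Icc 1 N, dconv f n = ∑ n ∈ Icc 1 N, f n * ((N / n : ℕ) : ℝ) := by
  simpa [dconv, Nat.sum_divisorsAntidiagonal (f := fun d _ ↦ f d)] using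
    sum_Icc_sum_divisorsAntidiagonal f (fun _ ↦ 1) N

lemma Mt_dconv_eq_sum (f : ℕ → ℝ) {y : ℝ} {N : ℕ} (hN : ⌊y⌋₊ ≤ N) :
    Mt (dconv f) y = ∑ n ∈ Icc 1 N, f n / n * (⌊y / (n : ℕ)⌋₊ / (y / n)) := by
  rw [Mt, sum_dconv, sum_div]
  refine (sum_subset (Icc_subset_Icc_right hN) fun n hn hny ↦ ?_).trans
    (sum_congr rfl fun n hn ↦ ?_)
  · have : ⌊y⌋₊ < n := not_le.1 fun h ↦ hny (mem_Icc.2 ⟨(mem_Icc.1 hn).1, h⟩)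
    rw [Nat.div_eq_of_lt this, Nat.cast_zero, mul_zero, zero_div]
  · have : (n : ℝ) ≠ 0 := Nat.cast_ne_zero.2 (Nat.one_le_iff_ne_zero.1 (mem_Icc.1 hn).1)
    rw [Nat.floor_div_natCast]
    field_simp

/-- The kernel `K_w` for which `L_f(x) - M̃_{1 ∗ f}(w x) = ∑_n f(n)/n K_w(x/n)`. -/
noncomputable def discrepancyKernel (w y : ℝ) : ℝ := (if 1 ≤ y then 1 else 0) - ⌊w * y⌋₊ / (w * y)

lemma Lsum_sub_Mt_dconv_eq_sum (f : ℕ → ℝ) {w x : ℝ} {N : ℕ} (hx : ⌊x⌋₊ ≤ N)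
    (hwx : ⌊w * x⌋₊ ≤ N) :
    Lsum f x - Mt (dconv f) (w * x)
      = ∑ n ∈ Icc 1 N, f n / n * discrepancyKernel w (x / (n : ℕ)) := by
  simp only [Lsum_eq_sum_ite f hx, Mt_dconv_eq_sum f hwx, ← sum_sub_distrib, ← mul_sub,
    discrepancyKernel, mul_div_assoc]

lemma measurable_discrepancyKernel (w : ℝ) : Measurable (discrepancyKernel w) := by
  unfold discrepancyKernel
  refine (Measurable.ite measurableSet_Ici measurable_const measurable_const).sub
    (Measurable.div ?_ (by fun_prop))
  exact measurable_from_nat.comp (Nat.measurable_floor.comp (by fun_prop))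

lemma abs_discrepancyKernel_le_one (w y : ℝ) : |discrepancyKernel w y| ≤ 1 := by
  have hq0 : 0 ≤ (⌊w * y⌋₊ : ℝ) / (w * y) := by
    rcases le_total (w * y) 0 with h | h
    · simp [Nat.floor_of_nonpos h]
    · positivity
  have hq1 : (⌊w * y⌋₊ : ℝ) / (w * y) ≤ 1 := by
    rcases le_total (w * y) 0 with h | h
    · simp [Nat.floor_of_nonpos h]
    · exact div_le_one_of_le₀ (Nat.floor_le h) h
  rw [discrepancyKernel, abs_le]
  split_ifs <;> constructor <;> linarith

lemma abs_Lsum_sub_Mt_dconv_le_sum (f : ℕ → ℝ) {w x : ℝ} {N : ℕ} (hx : ⌊x⌋₊ ≤ N)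
    (hwx : ⌊w * x⌋₊ ≤ N) :
    |Lsum f x - Mt (dconv f) (w * x)| ≤ ∑ n ∈ Icc 1 N, |f n / n| := by
  rw [Lsum_sub_Mt_dconv_eq_sum f hx hwx]
  refine abs_sum_le_sum_abs _ _ |>.trans (sum_le_sum fun n _ ↦ ?_)
  rw [abs_mul]
  exact mul_le_of_le_one_right (abs_nonneg _) (abs_discrepancyKernel_le_one w _)

lemma abs_discrepancyKernel_le_div {w y : ℝ} (hw : 0 < w) (hy : 0 < y) :
    |discrepancyKernel w y| ≤ max 1 w⁻¹ / y := by
  rcases lt_or_ge y 1 with h | h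
  · calc |discrepancyKernel w y| ≤ 1 := abs_discrepancyKernel_le_one w y
      _ ≤ y⁻¹ := (one_le_inv₀ hy).2 h.le
      _ ≤ max 1 w⁻¹ / y := by rw [← one_div]; gcongr; exact le_max_left _ _
  · have hfloor := Nat.floor_le (mul_pos hw hy).le
    have hfrac : w * y - ⌊w * y⌋₊ ≤ 1 := by linarith [Nat.lt_floor_add_one (w * y)]
    calc |discrepancyKernel w y| = (w * y - ⌊w * y⌋₊) / (w * y) := by
          rw [discrepancyKernel, if_pos h, one_sub_div (by positivity),
            abs_of_nonneg (div_nonneg (sub_nonneg.2 hfloor) (by positivity))]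
      _ ≤ 1 / (w * y) := by gcongr
      _ = w⁻¹ / y := by field_simp
      _ ≤ max 1 w⁻¹ / y := by gcongr; exact le_max_right _ _

lemma discrepancyKernel_eq_zero {w y : ℝ} (hy : 0 ≤ y) (h : max 1 w * y < 1) :
    discrepancyKernel w y = 0 := by
  have hy1 : y < 1 := (le_mul_of_one_le_left hy (le_max_left 1 w)).trans_lt h
  have hwy : w * y < 1 := (mul_le_mul_of_nonneg_right (le_max_right 1 w) hy).trans_lt h
  rw [discrepancyKernel, if_neg hy1.not_ge, Nat.floor_eq_zero.2 hwy]
  simp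

lemma exists_continuousAt_discrepancyKernel_ne_zero {w : ℝ} (hw : 0 < w) :
    ∃ y : ℝ, 0 < y ∧ ContinuousAt (discrepancyKernel w) y ∧ discrepancyKernel w y ≠ 0 := by
  set m := ⌊w⌋₊ + 1
  have hm : w < m := mod_cast Nat.lt_floor_add_one w
  have hlocal : ∀ y ∈ Set.Ioo (m / w) ((m + 1) / w), discrepancyKernel w y = 1 - m / (w * y) :=
    fun y hy ↦ by
    have hmy : m < w * y := (div_lt_iff₀' hw).1 hy.1
    have hym : w * y < m + 1 := (lt_div_iff₀' hw).1 hy.2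
    have hy1 : 1 ≤ y := ((one_lt_div hw).2 hm).le.trans hy.1.le
    rw [discrepancyKernel, if_pos hy1,
      (Nat.floor_eq_iff (hw.le.trans (hm.trans hmy).le)).2 ⟨hmy.le, hym⟩]
  have hmem : (m + 1 / 2) / w ∈ Set.Ioo (m / w) ((m + 1) / w) := by
    constructor <;> gcongr <;> linarith
  have : (0 : ℝ) < m := hw.trans hm
  refine ⟨(m + 1 / 2) / w, by positivity, ContinuousAt.congr (f := fun y ↦ 1 - m / (w * y)) ?_
    (eventuallyEq_of_mem (Ioo_mem_nhds hmem.1 hmem.2) fun y hy ↦ (hlocal y hy).symm), ?_⟩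
  · exact continuousAt_const.sub (continuousAt_const.div (by fun_prop) (by positivity))
  · rw [hlocal _ hmem, mul_div_cancel₀ _ hw.ne', sub_ne_zero]
    exact (div_lt_one (by positivity)).2 (by linarith) |>.ne'

lemma norm_exp_neg_mul_mul_I (t v : ℝ) : ‖Complex.exp (-(t * v * I))‖ = 1 := by
  simpa using Complex.norm_exp_ofReal_mul_I (-(t * v))

/-- The twisted kernel `K_w(e^v) e^{-itv}` in the logarithmic scale. -/
noncomputable def twistedKernel (w t v : ℝ) : ℂ :=
  (discrepancyKernel w (Real.exp v) : ℂ) * Complex.exp (-(t * v * I))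

lemma norm_twistedKernel (w t v : ℝ) :
    ‖twistedKernel w t v‖ = |discrepancyKernel w (Real.exp v)| := by
  rw [twistedKernel, norm_mul, norm_exp_neg_mul_mul_I, mul_one, Complex.norm_real, Real.norm_eq_abs]

lemma norm_twistedKernel_le {w : ℝ} (hw : 0 < w) (t v : ℝ) :
    ‖twistedKernel w t v‖ ≤ max 1 w⁻¹ * Real.exp (-v) := by
  rw [norm_twistedKernel, Real.exp_neg, ← div_eq_mul_inv]
  exact abs_discrepancyKernel_le_div hw (Real.exp_pos v)

lemma twistedKernel_eq_zero {w t v : ℝ} (hv : v < -Real.log (max 1 w)) :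
    twistedKernel w t v = 0 := by
  have hlt : max 1 w * Real.exp v < 1 :=
    calc max 1 w * Real.exp v < max 1 w * Real.exp (-Real.log (max 1 w)) := by gcongr
      _ = 1 := by rw [Real.exp_neg, Real.exp_log (by positivity), mul_inv_cancel₀ (by positivity)]
  rw [twistedKernel, discrepancyKernel_eq_zero (Real.exp_pos v).le hlt, Complex.ofReal_zero,
    zero_mul]

lemma integrable_twistedKernel {w : ℝ} (hw : 0 < w) (t : ℝ) :
    MeasureTheory.Integrable (twistedKernel w t) := by
  refine integrable_of_norm_le_exp_neg ?_ (norm_twistedKernel_le hw t)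
    fun _ ↦ twistedKernel_eq_zero
  have := (measurable_discrepancyKernel w).comp Real.measurable_exp
  exact (Complex.measurable_ofReal.comp this).mul (by fun_prop)

lemma exists_ne_zero_integral_twistedKernel_ne_zero {w : ℝ} (hw : 0 < w) :
    ∃ t : ℝ, t ≠ 0 ∧ ∫ v, twistedKernel w t v ≠ 0 := by
  obtain ⟨y, hy, hc, hne⟩ := exists_continuousAt_discrepancyKernel_ne_zero hw
  have hintegrable : MeasureTheory.Integrable fun v ↦ (discrepancyKernel w (Real.exp v) : ℂ) :=
    (integrable_twistedKernel hw 0).congr (Eventually.of_forall fun v ↦ by simp [twistedKernel])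
  refine exists_ne_zero_integral_mul_exp_ne_zero hintegrable (x := Real.log y) ?_ ?_
  · rw [← Real.exp_log hy] at hc
    exact Complex.continuous_ofReal.continuousAt.comp
      (hc.comp (f := Real.exp) Real.continuous_exp.continuousAt)
  · rw [Real.exp_log hy]
    exact mod_cast hne

/-! ### Correlation of the error term with `e^{itu}` -/

lemma mul_discrepancyKernel_mul_exp_eq (r w t u : ℝ) {n : ℕ} (hn : 1 ≤ n) :
    ((r / n * discrepancyKernel w (Real.exp u / n) : ℝ) : ℂ) * Complex.exp (-(t * u * I))
      = r * (n : ℂ) ^ (-(1 + t * I)) * twistedKernel w t (u - Real.log n) := by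
  have hn0 : (n : ℂ) ≠ 0 := mod_cast Nat.one_le_iff_ne_zero.1 hn
  have hexp : Complex.exp (-(t * u * I)) = Complex.exp (Real.log n * -(t * I))
      * Complex.exp (-(t * ((u - Real.log n : ℝ) : ℂ) * I)) := by
    rw [← Complex.exp_add]
    congr 1
    push_cast
    ring
  rw [twistedKernel, Real.exp_sub, Real.exp_log (mod_cast hn), neg_add, Complex.cpow_add _ _ hn0,
    Complex.cpow_neg_one, Complex.cpow_def_of_ne_zero hn0, ← Complex.natCast_log, hexp]
  push_cast
  ring

lemma integral_Lsum_sub_Mt_dconv_mul_exp (f : ℕ → ℝ) {w : ℝ} (hw : 0 < w) (t : ℝ) {U V : ℝ}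
    (hUV : U ≤ V) :
    ∫ u in U..V, ((Lsum f (Real.exp u) - Mt (dconv f) (w * Real.exp u) : ℝ) : ℂ)
        * Complex.exp (-(t * u * I))
      = ∑ n ∈ Icc 1 ⌊Real.exp (V + Real.log (max 1 w))⌋₊, (f n : ℂ) * (n : ℂ) ^ (-(1 + t * I))
          * (∫ s in Set.Iic (V - Real.log (n : ℕ)), twistedKernel w t s)
        - ∑ n ∈ Icc 1 ⌊Real.exp (V + Real.log (max 1 w))⌋₊, (f n : ℂ) * (n : ℂ) ^ (-(1 + t * I))
          * ∫ s in Set.Iic (U - Real.log (n : ℕ)), twistedKernel w t s := by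
  set N := ⌊Real.exp (V + Real.log (max 1 w))⌋₊
  have hk := integrable_twistedKernel hw t
  have hrange : ∀ u ≤ V, ⌊Real.exp u⌋₊ ≤ N ∧ ⌊w * Real.exp u⌋₊ ≤ N := fun u hu ↦ by
    have hmax : max 1 w * Real.exp u ≤ Real.exp (V + Real.log (max 1 w)) := by
      rw [add_comm, Real.exp_add, Real.exp_log (by positivity)]
      gcongr
    exact ⟨Nat.floor_mono ((le_mul_of_one_le_left (Real.exp_pos u).le (le_max_left 1 w)).trans
      hmax), Nat.floor_mono (le_trans (by gcongr; exact le_max_right 1 w) hmax)⟩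
  calc _ = ∫ u in U..V, ∑ n ∈ Icc 1 N, (f n : ℂ) * (n : ℂ) ^ (-(1 + t * I))
        * twistedKernel w t (u - Real.log (n : ℕ)) := by
        refine intervalIntegral.integral_congr fun u hu ↦ ?_
        obtain ⟨hu1, hu2⟩ := hrange u (Set.uIcc_of_le hUV ▸ hu).2
        simp only [Lsum_sub_Mt_dconv_eq_sum f hu1 hu2, Complex.ofReal_sum, sum_mul]
        exact sum_congr rfl fun n hn ↦
          mul_discrepancyKernel_mul_exp_eq _ w t u (mem_Icc.1 hn).1
    _ = ∑ n ∈ Icc 1 N, ∫ u in U..V, (f n : ℂ) * (n : ℂ) ^ (-(1 + t * I))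
        * twistedKernel w t (u - Real.log (n : ℕ)) :=
        intervalIntegral.integral_finsetSum fun n _ ↦
          ((hk.comp_sub_right (Real.log n)).intervalIntegrable).const_mul _
    _ = _ := by
        rw [← sum_sub_distrib]
        refine sum_congr rfl fun n _ ↦ ?_
        rw [intervalIntegral.integral_const_mul, intervalIntegral.integral_comp_sub_right,
          ← mul_sub, intervalIntegral.integral_Iic_sub_Iic hk.integrableOn hk.integrableOn]

lemma norm_integral_sub_mul_logPartialSum_sub_le {f : ℕ → ℝ} (hf : ∀ n, |f n| ≤ 1) {w : ℝ}
    (hw : 0 < w) (t : ℝ) {U V : ℝ} (hUV : U ≤ V) :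
    ‖(∫ u in U..V, ((Lsum f (Real.exp u) - Mt (dconv f) (w * Real.exp u) : ℝ) : ℂ)
          * Complex.exp (-(t * u * I)))
        - (logPartialSum (fun n ↦ (f n : ℂ) * (n : ℂ) ^ (-(1 + t * I))) V
          - logPartialSum (fun n ↦ (f n : ℂ) * (n : ℂ) ^ (-(1 + t * I))) U)
          * ∫ s, twistedKernel w t s‖ ≤ 2 * (max 1 w⁻¹ * max 1 w ^ 2) := by
  have ha : ∀ n : ℕ, 1 ≤ n → ‖(f n : ℂ) * (n : ℂ) ^ (-(1 + t * I))‖ ≤ (n : ℝ)⁻¹ := fun n hn ↦ by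
    rw [norm_mul, Complex.norm_real, Real.norm_eq_abs]
    exact (mul_le_of_le_one_left (norm_nonneg _) (hf n)).trans
      (norm_natCast_cpow_neg_le_inv hn (by simp))
  have hsum : ∀ x ≤ V, _ := fun x hx ↦ norm_sum_mul_integral_Iic_sub_le
    (integrable_twistedKernel hw t) (Real.log_nonneg (le_max_left 1 w)) (norm_twistedKernel_le hw t)
    (fun _ ↦ twistedKernel_eq_zero) ha (add_le_add_left hx (Real.log (max 1 w)))
  rw [integral_Lsum_sub_Mt_dconv_mul_exp f hw t hUV, sub_mul, sub_sub_sub_comm, two_mul]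
  simpa only [Real.exp_log (zero_lt_one.trans_le (le_max_left 1 w))] using
    norm_sub_le_of_le (hsum V le_rfl) (hsum U hUV)

lemma eventually_mul_rpow_le_norm_sub {E : Type*} [NormedAddCommGroup E] [NormedSpace ℝ E]
    {S : ℝ → E} {α β C : ℝ} {C₀ : E} (hα : 0 < α) (hβα : β < α) (hC₀ : C₀ ≠ 0)
    (hS : ∀ V, 1 ≤ V → ‖S V - V ^ α • C₀‖ ≤ C * V ^ β) :
    ∃ c : ℝ, 0 < c ∧ ∀ᶠ U : ℝ in atTop, c * U ^ α ≤ ‖S (2 * U) - S U‖ := by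
  have h2α : 0 < (2 : ℝ) ^ α - 1 := sub_pos.2 (Real.one_lt_rpow one_lt_two hα)
  set c := (2 ^ α - 1) * ‖C₀‖
  have hc : 0 < c := mul_pos h2α (norm_pos_iff.2 hC₀)
  have hgrow : Tendsto (fun U : ℝ ↦ c / 2 * U ^ (α - β)) atTop atTop :=
    (tendsto_rpow_atTop (sub_pos.2 hβα)).const_mul_atTop (half_pos hc)
  refine ⟨c / 2, half_pos hc, ?_⟩
  filter_upwards [eventually_ge_atTop 1, hgrow.eventually_ge_atTop (C * (2 ^ β + 1))] with U hU hUC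
  have hU0 : 0 < U := one_pos.trans_le hU
  have hmain : c * U ^ α = ‖(2 * U) ^ α • C₀ - U ^ α • C₀‖ := by
    rw [Real.mul_rpow zero_le_two hU0.le, ← sub_smul, ← sub_one_mul, norm_smul,
      Real.norm_of_nonneg (by positivity)]
    ring
  have herr : ‖(S (2 * U) - S U) - ((2 * U) ^ α • C₀ - U ^ α • C₀)‖ ≤ c / 2 * U ^ α :=
    calc _ ≤ C * (2 * U) ^ β + C * U ^ β := by
          rw [sub_sub_sub_comm]
          exact norm_sub_le_of_le (hS _ (by linarith)) (hS U hU)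
      _ = C * (2 ^ β + 1) * U ^ β := by rw [Real.mul_rpow zero_le_two hU0.le]; ring
      _ ≤ c / 2 * U ^ (α - β) * U ^ β := by gcongr
      _ = c / 2 * U ^ α := by rw [mul_assoc, ← Real.rpow_add hU0, sub_add_cancel]
  linarith [norm_le_norm_add_norm_sub (S (2 * U) - S U) ((2 * U) ^ α • C₀ - U ^ α • C₀)]

theorem exists_eventually_mul_rpow_le_norm_integral {w : ℝ} (hw : 0 < w) :
    ∃ t c : ℝ, 0 < c ∧ ∀ᶠ U : ℝ in atTop, c * U ^ (2 / Real.pi) ≤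
      ‖∫ u in U..2 * U, ((Lsum (resonator t) (Real.exp u)
          - Mt (dconv (resonator t)) (w * Real.exp u) : ℝ) : ℂ) * Complex.exp (-(t * u * I))‖ := by
  obtain ⟨t, ht, hK⟩ := exists_ne_zero_integral_twistedKernel_ne_zero hw
  obtain ⟨C₀, hC₀, C, hS⟩ := exists_ne_zero_norm_logPartialSum_twistedResonator_sub_le ht
  have hexp : (3 / 5 : ℝ) < 2 / Real.pi := by
    rw [div_lt_div_iff₀ (by norm_num) Real.pi_pos]
    linarith [Real.pi_lt_d2]
  obtain ⟨c, hc, hev⟩ := eventually_mul_rpow_le_norm_sub (by positivity) hexp hC₀ hS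
  set K := ∫ v, twistedKernel w t v
  have hK0 : 0 < ‖K‖ := norm_pos_iff.2 hK
  have hgrow : Tendsto (fun U : ℝ ↦ ‖K‖ * c / 2 * U ^ (2 / Real.pi)) atTop atTop :=
    (tendsto_rpow_atTop (by positivity)).const_mul_atTop (by positivity)
  refine ⟨t, ‖K‖ * c / 2, by positivity, ?_⟩
  filter_upwards [hev, eventually_ge_atTop 0,
    hgrow.eventually_ge_atTop (2 * (max 1 w⁻¹ * max 1 w ^ 2))] with U hU hU0 hUB
  have herr := norm_integral_sub_mul_logPartialSum_sub_le (abs_resonator_le_one t) hw t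
    (by linarith : U ≤ 2 * U)
  have hmain := mul_le_mul_of_nonneg_right hU hK0.le
  rw [← norm_mul] at hmain
  have htri := norm_le_norm_add_norm_sub (∫ u in U..2 * U, ((Lsum (resonator t) (Real.exp u)
      - Mt (dconv (resonator t)) (w * Real.exp u) : ℝ) : ℂ) * Complex.exp (-(t * u * I)))
    ((logPartialSum (twistedResonator t) (2 * U) - logPartialSum (twistedResonator t) U) * K)
  have herr' := htri.trans (add_le_add_right herr _)
  linarith

lemma bddAbove_abs_Lsum_sub_Mt_dconv (f : ℕ → ℝ) {w : ℝ} (hw : 0 ≤ w) (X Y : ℝ) :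
    BddAbove ((fun x : ℝ ↦ |Lsum f x - Mt (dconv f) (w * x)|) '' Set.Ioc X Y) := by
  refine ⟨∑ n ∈ Icc 1 (max ⌊Y⌋₊ ⌊w * Y⌋₊), |f n / n|, ?_⟩
  rintro _ ⟨x, ⟨-, hx⟩, rfl⟩
  exact abs_Lsum_sub_Mt_dconv_le_sum f ((Nat.floor_mono hx).trans (le_max_left _ _))
    ((Nat.floor_mono (by gcongr)).trans (le_max_right _ _))

lemma norm_integral_le_log_mul_sSup (f : ℕ → ℝ) {w : ℝ} (hw : 0 ≤ w) (t : ℝ) {X : ℝ}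
    (hX : 1 ≤ X) :
    ‖∫ u in Real.log X..2 * Real.log X, ((Lsum f (Real.exp u)
        - Mt (dconv f) (w * Real.exp u) : ℝ) : ℂ) * Complex.exp (-(t * u * I))‖
      ≤ sSup ((fun x : ℝ ↦ |Lsum f x - Mt (dconv f) (w * x)|) '' Set.Ioc X (X ^ 2))
        * Real.log X := by
  have hX0 : 0 < X := one_pos.trans_le hX
  have hlog : 0 ≤ Real.log X := Real.log_nonneg hX
  have hbound : ∀ u ∈ Set.uIoc (Real.log X) (2 * Real.log X), ‖((Lsum f (Real.exp u)
      - Mt (dconv f) (w * Real.exp u) : ℝ) : ℂ) * Complex.exp (-(t * u * I))‖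
      ≤ sSup ((fun x : ℝ ↦ |Lsum f x - Mt (dconv f) (w * x)|) '' Set.Ioc X (X ^ 2)) := by
    intro u hu
    rw [Set.uIoc_of_le (by linarith)] at hu
    rw [norm_mul, norm_exp_neg_mul_mul_I, mul_one, Complex.norm_real, Real.norm_eq_abs]
    refine le_csSup (bddAbove_abs_Lsum_sub_Mt_dconv f hw X (X ^ 2)) ⟨Real.exp u, ⟨?_, ?_⟩, rfl⟩
    · exact (Real.log_lt_iff_lt_exp hX0).1 hu.1
    · exact (Real.le_log_iff_exp_le (by positivity)).1 (by simpa using hu.2)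
  refine (intervalIntegral.norm_integral_le_of_norm_le_const hbound).trans_eq ?_
  rw [two_mul, add_sub_cancel_right, abs_of_nonneg hlog]

theorem stmt3_general {w : ℝ} (hw : 0 < w) :
    ∃ f : ℕ → ℝ, (∀ n, f n ∈ Set.Icc (-1 : ℝ) 1) ∧ IsMult f ∧
      ∃ c : ℝ, 0 < c ∧ ∃ X₀ : ℝ, ∀ X : ℝ, X₀ ≤ X →
        c / (Real.log X) ^ ((1 : ℝ) - 2 / Real.pi) ≤
          sSup ((fun x : ℝ ↦ |Lsum f x - Mt (dconv f) (w * x)|) '' Set.Ioc X (X ^ 2)) := by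
  obtain ⟨t, c, hc, hev⟩ := exists_eventually_mul_rpow_le_norm_integral hw
  refine ⟨resonator t, fun n ↦ abs_le.1 (abs_resonator_le_one t n), isMult_resonator t, c, hc,
    eventually_atTop.1 ?_⟩
  filter_upwards [Real.tendsto_log_atTop.eventually hev, eventually_gt_atTop 1] with X hlower hX
  have hlog : 0 < Real.log X := Real.log_pos hX
  have hupper := hlower.trans (norm_integral_le_log_mul_sSup (resonator t) hw.le t hX.le)
  rw [Real.rpow_sub hlog, Real.rpow_one, div_div_eq_mul_div]
  exact (div_le_iff₀ hlog).2 hupper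

theorem stmt3 (ψ : ℝ → ℝ)
    (hψ_pos : ∀ X : ℝ, 3 ≤ X → 0 < ψ X)
    (hψ_mono : ∀ X Y : ℝ, 3 ≤ X → X ≤ Y → ψ Y ≤ ψ X)
    (hψ_lim : Tendsto ψ atTop (nhds 0)) :
    ∃ f : ℕ → ℝ, (∀ n, f n ∈ Set.Icc (-1 : ℝ) 1) ∧ IsMult f ∧
      ∃ c : ℝ, 0 < c ∧ ∃ X₀ : ℝ, ∀ X : ℝ, X₀ ≤ X →
        c * ψ X / (Real.log X) ^ ((1 : ℝ) - 2 / Real.pi) ≤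
          sSup ((fun x : ℝ => |Lsum f x - Mt (dconv f) (w0 * x)|) '' Set.Ioc X (X ^ 2)) := by
  obtain ⟨f, hf, hmult, c, hc, X₀, hX₀⟩ := stmt3_general (w := w0) (Real.exp_pos _)
  have hψ3 : 0 < ψ 3 := hψ_pos 3 le_rfl
  refine ⟨f, hf, hmult, c / ψ 3, div_pos hc hψ3, max X₀ 3, fun X hX ↦ ?_⟩
  have hX3 : 3 ≤ X := le_of_max_le_right hX
  have hψX : c / ψ 3 * ψ X ≤ c := by
    rw [div_mul_eq_mul_div, div_le_iff₀ hψ3]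
    exact mul_le_mul_of_nonneg_left (hψ_mono 3 X le_rfl hX3) hc.le
  exact (div_le_div_of_nonneg_right hψX (Real.rpow_nonneg (Real.log_nonneg (by linarith)) _)).trans
    (hX₀ X (le_of_max_le_left hX))
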